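/- arXiv:2412.19485 — 7 statements merged into one kernel-verified Lean document; each statement's English description precedes it below -/
import Mathlib

section
/- Let S be a factorizable inverse monoid with zero, with semilattice of idempotents E and group of units G, such that the natural connection θ is a dual isomorphism from E onto a sublattice of L(G). Then any two composition subcentral (resp. composition central) idempotent series of S are isomorphic (an analogue of the Jordan–Hölder theorem). -/
/-- An inverse monoid: a monoid in which every element `a` has an inverse `a⁻¹`
satisfying `a * a⁻¹ * a = a` and `a⁻¹ * a * a⁻¹ = a⁻¹`, and this inverse is unique. -/
class InverseMonoid (S : Type*) extends Monoid S, Inv S where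
  mul_inv_mul : ∀ a : S, a * a⁻¹ * a = a
  inv_mul_inv : ∀ a : S, a⁻¹ * a * a⁻¹ = a⁻¹
  inv_unique : ∀ a b : S, a * b * a = a → b * a * b = b → b = a⁻¹

/-- An inverse monoid with a (two-sided absorbing) zero element. -/
class InverseMonoidWithZero (S : Type*) extends InverseMonoid S, Zero S where
  zero_mul : ∀ a : S, 0 * a = 0
  mul_zero : ∀ a : S, a * 0 = 0

/-- The natural partial order on an inverse monoid: `a ≤ b` iff `a = e * b`
for some idempotent `e`. -/
def NatLe {S : Type*} [Monoid S] (a b : S) : Prop :=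
  ∃ e : S, IsIdempotentElem e ∧ a = e * b

/-- The filter `e↑ = {s | e ≤ s}` generated by `e`. -/
def upfilter {S : Type*} [Monoid S] (e : S) : Set S := {s | NatLe e s}

/-- `c` is central in (a subset) `T`: it belongs to `T` and commutes with all elements of `T`. -/
def CentralIn {S : Type*} [Mul S] (T : Set S) (c : S) : Prop :=
  c ∈ T ∧ ∀ s ∈ T, c * s = s * c

/-- A monoid is factorizable if every element is a product of an idempotent and a unit. -/
def Factorizable (S : Type*) [Monoid S] : Prop :=
  ∀ s : S, ∃ e g : S, IsIdempotentElem e ∧ IsUnit g ∧ s = e * g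

/-- The natural connection `θ`: for an (idempotent) `e`, the subgroup
`eθ = {g ∈ G : e * g = e}` of the group of units. -/
def natconn {S : Type*} [Monoid S] (e : S) : Subgroup Sˣ where
  carrier := {g : Sˣ | e * (g : S) = e}
  one_mem' := by simp
  mul_mem' := by
    intro a b ha hb
    simp only [Set.mem_setOf_eq, Units.val_mul] at *
    rw [← mul_assoc, ha, hb]
  inv_mem' := by
    intro a ha
    simp only [Set.mem_setOf_eq] at *
    nth_rewrite 1 [← ha]
    rw [mul_assoc, ← Units.val_mul, mul_inv_cancel, Units.val_one, mul_one]

/-- The natural connection is a dual isomorphism from the idempotents onto a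
sublattice of the lattice of subgroups of the group of units: it is injective on
idempotents, order-reversing in both directions, and its image is closed under
joins and meets of subgroups. -/
def NatconnDualIso (S : Type*) [Monoid S] : Prop :=
  (∀ e f : S, IsIdempotentElem e → IsIdempotentElem f → natconn e = natconn f → e = f) ∧
  (∀ e f : S, IsIdempotentElem e → IsIdempotentElem f →
    (NatLe e f ↔ natconn f ≤ natconn e)) ∧
  (∀ e f : S, IsIdempotentElem e → IsIdempotentElem f →
    (∃ h : S, IsIdempotentElem h ∧ natconn h = natconn e ⊔ natconn f) ∧
    (∃ h : S, IsIdempotentElem h ∧ natconn h = natconn e ⊓ natconn f))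

/-- `j` is the join (least upper bound) of `e` and `f` with respect to the natural order. -/
def IsNatJoin {S : Type*} [Monoid S] (e f j : S) : Prop :=
  NatLe e j ∧ NatLe f j ∧ ∀ x : S, NatLe e x → NatLe f x → NatLe j x

/-- `F_{e,f} = f · e↑`. -/
def Fef {S : Type*} [Monoid S] (e f : S) : Set S := (f * ·) '' upfilter e

/-- `UF_{e,f}`: the group of units of the monoid `F_{e,f}` (whose identity is `f`). -/
def UFef {S : Type*} [Monoid S] (e f : S) : Set S :=
  {x ∈ Fef e f | ∃ y ∈ Fef e f, x * y = f ∧ y * x = f}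

/-- The centre of a subset `T`. -/
def ZIn {S : Type*} [Mul S] (T : Set S) : Set S := {x ∈ T | ∀ y ∈ T, x * y = y * x}

/-- Two subsets are isomorphic as semigroups (with the induced multiplication). -/
def SubIso {S : Type*} [Mul S] (A B : Set S) : Prop :=
  ∃ φ : S → S, Set.BijOn φ A B ∧ ∀ a ∈ A, ∀ b ∈ A, φ (a * b) = φ a * φ b

/-- A subcentral idempotent series between `0` and `a`. -/
def IsSubcentralSeriesBetween {S : Type*} [Monoid S] [Zero S] (n : ℕ) (c : ℕ → S) (a : S) :
    Prop :=
  c 0 = 0 ∧ c n = a ∧ (∀ i ≤ n, IsIdempotentElem (c i)) ∧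
    ∀ i < n, CentralIn (upfilter (c i)) (c (i + 1))

/-- A subcentral idempotent series of `S` (between `0` and `1`). -/
def IsSubcentralSeries {S : Type*} [Monoid S] [Zero S] (n : ℕ) (c : ℕ → S) : Prop :=
  IsSubcentralSeriesBetween n c 1

/-- A central idempotent series of `S`. -/
def IsCentralSeries {S : Type*} [Monoid S] [Zero S] (n : ℕ) (c : ℕ → S) : Prop :=
  c 0 = 0 ∧ c n = 1 ∧ (∀ i ≤ n, IsIdempotentElem (c i)) ∧
    (∀ i < n, NatLe (c i) (c (i + 1))) ∧
    ∀ i < n, CentralIn Set.univ (c (i + 1))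

/-- A subcentral idempotent: one occurring in some subcentral idempotent series of `S`. -/
def IsSubcentralIdem {S : Type*} [Monoid S] [Zero S] (e : S) : Prop :=
  ∃ (n : ℕ) (c : ℕ → S), IsSubcentralSeries n c ∧ ∃ i ≤ n, c i = e

/-- A `G`-nilpotent series: a chain of central idempotents from `0` to `1` with
`F_{eᵢ,eᵢ₊₁} ⊆ Z(F_{0,eᵢ₊₁})`. -/
def GNilpotentSeries {S : Type*} [Monoid S] [Zero S] (n : ℕ) (c : ℕ → S) : Prop :=
  c 0 = 0 ∧ c n = 1 ∧ (∀ i ≤ n, IsIdempotentElem (c i) ∧ CentralIn Set.univ (c i)) ∧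
    (∀ i < n, NatLe (c i) (c (i + 1))) ∧
    ∀ i < n, Fef (c i) (c (i + 1)) ⊆ ZIn (Fef 0 (c (i + 1)))

/-- A `G`-solvable series: a chain of central idempotents from `0` to `1` with
each `F_{eᵢ,eᵢ₊₁}` commutative. -/
def GSolvableSeries {S : Type*} [Monoid S] [Zero S] (n : ℕ) (c : ℕ → S) : Prop :=
  c 0 = 0 ∧ c n = 1 ∧ (∀ i ≤ n, IsIdempotentElem (c i) ∧ CentralIn Set.univ (c i)) ∧
    (∀ i < n, NatLe (c i) (c (i + 1))) ∧
    ∀ i < n, ∀ x ∈ Fef (c i) (c (i + 1)), ∀ y ∈ Fef (c i) (c (i + 1)), x * y = y * x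

/-- `S` is `G`-nilpotent. -/
def GNilpotent (S : Type*) [Monoid S] [Zero S] : Prop :=
  ∃ (n : ℕ) (c : ℕ → S), GNilpotentSeries n c

/-- `S` is `G`-solvable. -/
def GSolvable (S : Type*) [Monoid S] [Zero S] : Prop :=
  ∃ (n : ℕ) (c : ℕ → S), GSolvableSeries n c

/-- Two idempotent series are isomorphic: same length, and a one-to-one correspondence
between their factors under which corresponding factors are isomorphic. -/
def SeriesIso {S : Type*} [Monoid S] (n : ℕ) (c : ℕ → S) (n' : ℕ) (d : ℕ → S) : Prop :=
  n = n' ∧ ∃ σ : ℕ → ℕ, Set.BijOn σ {i | i < n} {i | i < n'} ∧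
    ∀ i < n, SubIso (Fef (c i) (c (i + 1))) (Fef (d (σ i)) (d (σ i + 1)))

/-- A composition series (for a kind `P` of series): it has no repeated terms, and any
refinement of it (of the same kind) only repeats its terms. -/
def IsCompositionOf {S : Type*} (P : ℕ → (ℕ → S) → Prop) (n : ℕ) (c : ℕ → S) : Prop :=
  P n c ∧ (∀ i ≤ n, ∀ j ≤ n, c i = c j → i = j) ∧
    ∀ (m : ℕ) (d : ℕ → S), P m d → (∀ i ≤ n, ∃ j ≤ m, d j = c i) →
      ∀ j ≤ m, ∃ i ≤ n, d j = c i

section GroupPart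

variable {G : Type*} [Group G]

/-- `H` is a normal subgroup of `K`. -/
def NSub (H K : Subgroup G) : Prop :=
  H ≤ K ∧ ∀ h ∈ H, ∀ g ∈ K, g * h * g⁻¹ ∈ H

/-- `H ≤ K`, both normal in `G`. -/
def NCen (H K : Subgroup G) : Prop :=
  H ≤ K ∧ H.Normal ∧ K.Normal

/-- The closure properties needed for the Jordan–Hölder argument. -/
structure GoodRel (N : Subgroup G → Subgroup G → Prop) : Prop where
  nsub : ∀ {x y}, N x y → NSub x y
  sup : ∀ {x y z}, N x z → N y z → N (x ⊔ y) z
  inf : ∀ {x y}, N x (x ⊔ y) → N y (x ⊔ y) → N (x ⊓ y) x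
  supz : ∀ {x y z}, N x (x ⊔ y) → N y (x ⊔ y) → N z x → N (z ⊔ y) (x ⊔ y)
  mid : ∀ {x y z}, N x y → x ≤ z → N z y → N x z

theorem conj_sup {x y : Subgroup G} (g : G) (hx : ∀ h ∈ x, g * h * g⁻¹ ∈ x)
    (hy : ∀ h ∈ y, g * h * g⁻¹ ∈ y) : ∀ h ∈ x ⊔ y, g * h * g⁻¹ ∈ x ⊔ y := by
  have : x ⊔ y ≤ (x ⊔ y).comap (MulAut.conj g).toMonoidHom := by
    refine sup_le ?_ ?_
    · intro h hh
      simpa using (le_sup_left : x ≤ x ⊔ y) (hx h hh)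
    · intro h hh
      simpa using (le_sup_right : y ≤ x ⊔ y) (hy h hh)
  intro h hh
  simpa using this hh

theorem mem_sup_prod {A M : Subgroup G} (hn : ∀ a ∈ A, ∀ m ∈ M, m * a * m⁻¹ ∈ A)
    {b : G} (hb : b ∈ A ⊔ M) : ∃ a ∈ A, ∃ m ∈ M, b = a * m := by
  let T : Subgroup G :=
    { carrier := {b | ∃ a ∈ A, ∃ m ∈ M, b = a * m}
      one_mem' := ⟨1, A.one_mem, 1, M.one_mem, by simp⟩
      mul_mem' := by
        rintro _ _ ⟨a, ha, m, hm, rfl⟩ ⟨a', ha', m', hm', rfl⟩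
        refine ⟨a * (m * a' * m⁻¹), A.mul_mem ha (hn _ ha' _ hm), m * m', M.mul_mem hm hm', ?_⟩
        group
      inv_mem' := by
        rintro _ ⟨a, ha, m, hm, rfl⟩
        refine ⟨m⁻¹ * a⁻¹ * m⁻¹⁻¹, hn _ (A.inv_mem ha) _ (M.inv_mem hm), m⁻¹, M.inv_mem hm, ?_⟩
        group }
  have : A ⊔ M ≤ T := by
    refine sup_le ?_ ?_
    · intro a ha
      exact ⟨a, ha, 1, M.one_mem, by simp⟩
    · intro m hm
      exact ⟨1, A.one_mem, m, hm, by simp⟩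
  exact this hb

theorem goodSub : GoodRel (NSub (G := G)) where
  nsub := id
  sup := fun {x y z} hx hy => ⟨sup_le hx.1 hy.1, fun h hh g hg =>
    conj_sup g (fun h hh => hx.2 h hh g hg) (fun h hh => hy.2 h hh g hg) h hh⟩
  inf := fun {x y} hx hy => ⟨inf_le_left, fun h hh g hg =>
    ⟨hx.2 h hh.1 g (hx.1 hg), hy.2 h hh.2 g (hx.1 hg)⟩⟩
  supz := fun {x y z} hx hy hz => by
    refine ⟨sup_le_sup_right hz.1 y, fun h hh g hg => ?_⟩
    rw [sup_comm] at hg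
    obtain ⟨b, hb, a, ha, rfl⟩ := mem_sup_prod
      (fun u hu m hm => hy.2 u hu m (hx.1 hm)) hg
    have h1 : a * h * a⁻¹ ∈ z ⊔ y := conj_sup a (fun h hh => hz.2 h hh a ha)
      (fun h hh => hy.2 h hh a (hx.1 ha)) h hh
    have hb' : b ∈ z ⊔ y := (le_sup_right : y ≤ z ⊔ y) hb
    have h2 := (z ⊔ y).mul_mem ((z ⊔ y).mul_mem hb' h1) ((z ⊔ y).inv_mem hb')
    convert h2 using 1
    group
  mid := fun {x y z} hx hxz hz => ⟨hxz, fun h hh g hg => hx.2 h hh g (hz.1 hg)⟩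

theorem goodCen : GoodRel (NCen (G := G)) where
  nsub := fun {x y} h => ⟨h.1, fun a ha g _ => h.2.1.conj_mem a ha g⟩
  sup := fun {x y z} hx hy => by
    have := hx.2.1
    have := hy.2.1
    exact ⟨sup_le hx.1 hy.1, inferInstance, hx.2.2⟩
  inf := fun {x y} hx hy => by
    have := hx.2.1
    have := hy.2.1
    exact ⟨inf_le_left, inferInstance, hx.2.1⟩
  supz := fun {x y z} hx hy hz => by
    have := hz.2.1
    have := hy.2.1
    exact ⟨sup_le_sup_right hz.1 y, inferInstance, hx.2.2⟩
  mid := fun {x y z} hx hxz hz => ⟨hxz, hx.2.1, hz.2.1⟩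

end GroupPart

section SubIsoPart

variable {S : Type*} [Monoid S]

theorem SubIso.rfl' (A : Set S) : SubIso A A :=
  ⟨id, Set.bijOn_id A, fun _ _ _ _ => rfl⟩

theorem SubIso.symm' {A B : Set S} (hmul : ∀ a ∈ A, ∀ b ∈ A, a * b ∈ A)
    (h : SubIso A B) : SubIso B A := by
  obtain ⟨φ, hb, hm⟩ := h
  have hinv := hb.invOn_invFunOn
  have hb' : Set.BijOn (Function.invFunOn φ A) B A := hb.symm hinv.symm
  refine ⟨Function.invFunOn φ A, hb', fun a ha b hbb => ?_⟩
  have h1 := hb'.mapsTo ha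
  have h2 := hb'.mapsTo hbb
  have h3 := hm _ h1 _ h2
  rw [hinv.2 ha, hinv.2 hbb] at h3
  rw [← h3]
  exact hinv.1 (hmul _ h1 _ h2)

theorem SubIso.trans' {A B C : Set S} (h : SubIso A B) (h' : SubIso B C) : SubIso A C := by
  obtain ⟨φ, hb, hm⟩ := h
  obtain ⟨ψ, hb', hm'⟩ := h'
  refine ⟨ψ ∘ φ, hb'.comp hb, fun a ha b hbb => ?_⟩
  simp only [Function.comp]
  rw [hm a ha b hbb, hm' _ (hb.mapsTo ha) _ (hb.mapsTo hbb)]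

end SubIsoPart

section MonoidPart

variable {S : Type*} [InverseMonoid S]

theorem idem_mul_idem {e f : S} (he : IsIdempotentElem e) (hf : IsIdempotentElem f) :
    IsIdempotentElem (e * f) := by
  have he' : ∀ t, e * (e * t) = e * t := fun t => by rw [← mul_assoc, he.eq]
  have hf' : ∀ t, f * (f * t) = f * t := fun t => by rw [← mul_assoc, hf.eq]
  have h1 := InverseMonoid.mul_inv_mul (e * f)
  have h2 := InverseMonoid.inv_mul_inv (e * f)
  set x := (e * f)⁻¹ with hx
  have h1' : e * (f * (x * (e * f))) = e * f := by simpa only [mul_assoc] using h1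
  have h2' : ∀ t, x * (e * (f * (x * t))) = x * t := fun t => by
    have := congrArg (· * t) h2
    simpa only [mul_assoc] using this
  have h3 : f * x * e = x := by
    apply InverseMonoid.inv_unique (e * f)
    · simp only [mul_assoc, he', hf', h1']
    · simp only [mul_assoc, he', hf', h2']
  have h4 : IsIdempotentElem x := by
    have : (f * x * e) * (f * x * e) = f * x * e := by
      simp only [mul_assoc, h2']
    rw [h3] at this
    exact this
  have h5 : e * f = x⁻¹ := InverseMonoid.inv_unique x (e * f) h2 h1
  have h6 : x = x⁻¹ := InverseMonoid.inv_unique x x (by rw [h4.eq, h4.eq]) (by rw [h4.eq, h4.eq])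
  rw [h5, ← h6]
  exact h4

theorem idem_comm {e f : S} (he : IsIdempotentElem e) (hf : IsIdempotentElem f) :
    e * f = f * e := by
  have he' : ∀ t, e * (e * t) = e * t := fun t => by rw [← mul_assoc, he.eq]
  have hf' : ∀ t, f * (f * t) = f * t := fun t => by rw [← mul_assoc, hf.eq]
  have h1 : e * (f * (e * f)) = e * f := by
    simpa only [mul_assoc] using (idem_mul_idem he hf).eq
  have h2 : f * (e * (f * e)) = f * e := by
    simpa only [mul_assoc] using (idem_mul_idem hf he).eq
  have a : e * f = (e * f)⁻¹ := InverseMonoid.inv_unique _ _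
    (by simp only [mul_assoc, h1]) (by simp only [mul_assoc, h1])
  have b : f * e = (e * f)⁻¹ := InverseMonoid.inv_unique _ _
    (by simp only [mul_assoc, he', hf', h1]) (by simp only [mul_assoc, he', hf', h2])
  rw [a, ← b]

theorem natLe_iff {e s : S} (he : IsIdempotentElem e) : NatLe e s ↔ e * s = e := by
  constructor
  · rintro ⟨p, hp, h⟩
    have h1 : p * e = e := by
      conv_lhs => rw [h]
      rw [← mul_assoc, hp.eq, ← h]
    have h2 : e * p = e := by rw [idem_comm he hp, h1]
    calc e * s = e * p * s := by rw [h2]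
      _ = e * (p * s) := mul_assoc _ _ _
      _ = e := by rw [← h, he.eq]
  · intro h
    exact ⟨e, he, h.symm⟩

theorem mem_natconn {e : S} {g : Sˣ} : g ∈ natconn e ↔ e * (g : S) = e := Iff.rfl

theorem natconn_le {e f : S} (h : e * f = e) : natconn f ≤ natconn e := by
  intro g hg
  rw [mem_natconn] at *
  calc e * (g : S) = e * (f * g) := by rw [← mul_assoc, h]
    _ = e := by rw [hg, h]

theorem mul_of_le (hθ : NatconnDualIso S) {e f : S} (he : IsIdempotentElem e)
    (hf : IsIdempotentElem f) (h : natconn f ≤ natconn e) : e * f = e :=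
  (natLe_iff he).1 ((hθ.2.1 e f he hf).2 h)

theorem natconn_mul (hθ : NatconnDualIso S) {e f : S} (he : IsIdempotentElem e)
    (hf : IsIdempotentElem f) : natconn (e * f) = natconn e ⊔ natconn f := by
  obtain ⟨h, hh, hs⟩ := (hθ.2.2 e f he hf).1
  apply le_antisymm
  · rw [← hs]
    apply natconn_le
    rw [← mul_assoc, mul_of_le hθ hh he (hs ▸ le_sup_left), mul_of_le hθ hh hf (hs ▸ le_sup_right)]
  · refine sup_le (natconn_le ?_) (natconn_le ?_)
    · rw [mul_assoc, ← idem_comm he hf, ← mul_assoc, he.eq]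
    · rw [mul_assoc, hf.eq]

theorem mem_up_iff (hfact : Factorizable S) {e s : S} (he : IsIdempotentElem e) :
    s ∈ upfilter e ↔ ∃ k : S, ∃ g : Sˣ, IsIdempotentElem k ∧ e * k = e ∧ g ∈ natconn e ∧
      s = k * g := by
  constructor
  · intro h
    have h : e * s = e := (natLe_iff he).1 h
    obtain ⟨k, _, hk, ⟨g, rfl⟩, rfl⟩ := hfact s
    have h1 : k * e = e := by
      conv_lhs => rw [← h]
      rw [← mul_assoc, ← mul_assoc, idem_comm hk he, mul_assoc e, hk.eq, mul_assoc, h]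
    have h2 : e * k = e := by rw [idem_comm he hk, h1]
    refine ⟨k, g, hk, h2, ?_, rfl⟩
    rw [mem_natconn]
    rwa [← mul_assoc, h2] at h
  · rintro ⟨k, g, hk, h1, h2, rfl⟩
    refine (natLe_iff he).2 ?_
    rw [← mul_assoc, h1, h2]

theorem comm_unit (hθ : NatconnDualIso S) {f : S} (hf : IsIdempotentElem f) (g : Sˣ)
    (h1 : ∀ h ∈ natconn f, g * h * g⁻¹ ∈ natconn f)
    (h2 : ∀ h ∈ natconn f, g⁻¹ * h * g ∈ natconn f) : f * (g : S) = g * f := by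
  have hi : IsIdempotentElem (((g⁻¹ : Sˣ) : S) * f * g) := by
    have : ((g⁻¹ : Sˣ) : S) * f * g * (((g⁻¹ : Sˣ) : S) * f * g)
        = ((g⁻¹ : Sˣ) : S) * (f * f) * g := by
      simp only [mul_assoc, Units.mul_inv_cancel_left]
    exact this.trans (by rw [hf.eq])
  have key : ∀ h : Sˣ, h ∈ natconn (((g⁻¹ : Sˣ) : S) * f * g) ↔ g * h * g⁻¹ ∈ natconn f := by
    intro h
    rw [mem_natconn, mem_natconn]
    constructor
    · intro hh
      have := congrArg (fun t => (g : S) * t * ((g⁻¹ : Sˣ) : S)) hh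
      simpa [mul_assoc] using this
    · intro hh
      have := congrArg (fun t => ((g⁻¹ : Sˣ) : S) * t * (g : S)) hh
      simpa [mul_assoc] using this
  have : ((g⁻¹ : Sˣ) : S) * f * g = f := by
    apply hθ.1 _ _ hi hf
    ext h
    rw [key]
    constructor
    · intro hh
      have := h2 _ hh
      simpa [mul_assoc] using this
    · exact h1 h
  calc f * (g : S) = g * (((g⁻¹ : Sˣ) : S) * f * g) := by simp [mul_assoc]
    _ = g * f := by rw [this]

theorem central_iff (hfact : Factorizable S) (hθ : NatconnDualIso S) {e f : S}
    (he : IsIdempotentElem e) (hf : IsIdempotentElem f) :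
    CentralIn (upfilter e) f ↔ NSub (natconn f) (natconn e) := by
  constructor
  · rintro ⟨h1, h2⟩
    have h1 : e * f = e := (natLe_iff he).1 h1
    refine ⟨natconn_le h1, fun h hh g hg => ?_⟩
    have hc : f * (g : S) = g * f := h2 g ((natLe_iff he).2 hg)
    rw [mem_natconn] at *
    simp only [Units.val_mul]
    rw [← mul_assoc, ← mul_assoc, hc, mul_assoc (g : S), hh, ← hc]
    simp
  · rintro ⟨h1, h2⟩
    refine ⟨(hθ.2.1 e f he hf).2 h1, fun s hs => ?_⟩
    obtain ⟨k, g, hk, hek, hg, rfl⟩ := (mem_up_iff hfact he).1 hs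
    have hc := comm_unit hθ hf g (fun h hh => h2 h hh g hg)
      (fun h hh => by simpa using h2 h hh g⁻¹ (inv_mem hg))
    rw [← mul_assoc, idem_comm hf hk, mul_assoc, hc, mul_assoc]

theorem mem_Fef_iff (hfact : Factorizable S) (hθ : NatconnDualIso S) {e f x : S}
    (he : IsIdempotentElem e) (hf : IsIdempotentElem f) (hle : natconn f ≤ natconn e) :
    x ∈ Fef e f ↔ ∃ k : S, ∃ g : Sˣ, IsIdempotentElem k ∧ natconn f ≤ natconn k ∧
      natconn k ≤ natconn e ∧ g ∈ natconn e ∧ x = k * g := by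
  constructor
  · rintro ⟨s, hs, rfl⟩
    obtain ⟨k, g, hk, hek, hg, rfl⟩ := (mem_up_iff hfact he).1 hs
    refine ⟨f * k, g, idem_mul_idem hf hk, ?_, ?_, hg, (mul_assoc _ _ _).symm⟩
    · rw [natconn_mul hθ hf hk]
      exact le_sup_left
    · rw [natconn_mul hθ hf hk]
      exact sup_le hle (natconn_le hek)
  · rintro ⟨k, g, hk, h1, h2, hg, rfl⟩
    refine ⟨k * g, (mem_up_iff hfact he).2 ⟨k, g, hk, mul_of_le hθ he hk h2, hg, rfl⟩, ?_⟩
    show f * (k * g) = k * g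
    rw [← mul_assoc, idem_comm hf hk, mul_of_le hθ hk hf h1]

theorem Fef_mul (hfact : Factorizable S) (hθ : NatconnDualIso S) {e f : S}
    (he : IsIdempotentElem e) (hf : IsIdempotentElem f)
    (hn : NSub (natconn f) (natconn e)) : ∀ a ∈ Fef e f, ∀ b ∈ Fef e f, a * b ∈ Fef e f := by
  have hc := (central_iff hfact hθ he hf).2 hn
  rintro _ ⟨s, hs, rfl⟩ _ ⟨t, ht, rfl⟩
  refine ⟨s * t, ?_, ?_⟩
  · refine (natLe_iff he).2 ?_
    rw [← mul_assoc, (natLe_iff he).1 hs, (natLe_iff he).1 ht]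
  · show f * (s * t) = f * s * (f * t)
    rw [hc.2 s hs, mul_assoc s, ← mul_assoc f f, hf.eq, ← mul_assoc, ← mul_assoc, hc.2 s hs]

theorem idem_unit_inj {k k' : S} (hk : IsIdempotentElem k) (hk' : IsIdempotentElem k') {g g' : Sˣ}
    (h : k * (g : S) = k' * g') : k = k' ∧ g * g'⁻¹ ∈ natconn k := by
  have h1 : k' * k = k := by
    have : k' * k * (g : S) = k * g := by
      rw [mul_assoc, h, ← mul_assoc, hk'.eq]
    exact (Units.mul_left_inj g).1 this
  have h2 : k * k' = k' := by
    have : k * k' * (g' : S) = k' * g' := by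
      rw [mul_assoc, ← h, ← mul_assoc, hk.eq]
    exact (Units.mul_left_inj g').1 this
  have h3 : k = k' := by rw [← h1, ← idem_comm hk hk', h2]
  refine ⟨h3, ?_⟩
  subst h3
  rw [mem_natconn, Units.val_mul, ← mul_assoc, h]
  simp

theorem second_iso_F (hfact : Factorizable S) (hθ : NatconnDualIso S) {e f p q : S}
    (he : IsIdempotentElem e) (hf : IsIdempotentElem f) (hp : IsIdempotentElem p)
    (hq : IsIdempotentElem q) (hpe : natconn p = natconn e ⊔ natconn f)
    (hqe : natconn q = natconn e ⊓ natconn f) (hn : NSub (natconn e) (natconn p)) :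
    SubIso (Fef f q) (Fef p e) := by
  have hc := (central_iff hfact hθ hp he).2 hn
  have hfp : natconn f ≤ natconn p := hpe ▸ le_sup_right
  have hqf : natconn q ≤ natconn f := hqe ▸ inf_le_right
  have hmod : ∀ k : S, natconn q ≤ natconn k → natconn k ≤ natconn f → ∀ b : Sˣ,
      b ∈ natconn f → b ∈ natconn e ⊔ natconn k → b ∈ natconn k := by
    intro k hqk hkf b hb hb'
    obtain ⟨a, ha, m, hm, rfl⟩ := mem_sup_prod
      (fun u hu m hm => hn.2 u hu m (hfp (hkf hm))) hb'
    have haf : a ∈ natconn f := by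
      have := mul_mem hb (inv_mem (hkf hm))
      simpa using this
    have : a ∈ natconn q := by
      rw [hqe]
      exact ⟨ha, haf⟩
    exact mul_mem (hqk this) hm
  refine ⟨fun x => e * x, ⟨?_, ?_, ?_⟩, ?_⟩
  · intro x hx
    obtain ⟨k, g, hk, h1, h2, hg, rfl⟩ := (mem_Fef_iff hfact hθ hf hq hqf).1 hx
    refine (mem_Fef_iff hfact hθ hp he hn.1).2
      ⟨e * k, g, idem_mul_idem he hk, ?_, ?_, hfp hg, (mul_assoc _ _ _).symm⟩
    · rw [natconn_mul hθ he hk]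
      exact le_sup_left
    · rw [natconn_mul hθ he hk]
      exact sup_le hn.1 (h2.trans hfp)
  · intro x hx y hy hxy
    obtain ⟨k, g, hk, h1, h2, hg, rfl⟩ := (mem_Fef_iff hfact hθ hf hq hqf).1 hx
    obtain ⟨k', g', hk', h1', h2', hg', rfl⟩ := (mem_Fef_iff hfact hθ hf hq hqf).1 hy
    have hxy : e * (k * g) = e * (k' * g') := hxy
    rw [← mul_assoc, ← mul_assoc] at hxy
    obtain ⟨h3, h4⟩ := idem_unit_inj (idem_mul_idem he hk) (idem_mul_idem he hk') hxy
    have h5 : natconn e ⊔ natconn k = natconn e ⊔ natconn k' := by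
      rw [← natconn_mul hθ he hk, ← natconn_mul hθ he hk', h3]
    have h6 : k = k' := by
      apply hθ.1 _ _ hk hk'
      apply le_antisymm
      · intro b hb
        exact hmod k' h1' h2' b (h2 hb) (h5 ▸ (le_sup_right : natconn k ≤ _) hb)
      · intro b hb
        exact hmod k h1 h2 b (h2' hb) (h5 ▸ (le_sup_right : natconn k' ≤ _) hb)
    subst h6
    rw [natconn_mul hθ he hk] at h4
    have h7 : k * ((g * g'⁻¹ : Sˣ) : S) = k := hmod k h1 h2 _ (mul_mem hg (inv_mem hg')) h4
    calc k * (g : S) = k * ((g * g'⁻¹ : Sˣ) : S) * g' := by simp [mul_assoc]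
      _ = k * g' := by rw [h7]
  · intro x hx
    obtain ⟨k, g, hk, h1, h2, hg, rfl⟩ := (mem_Fef_iff hfact hθ hp he hn.1).1 hx
    rw [hpe] at hg
    obtain ⟨a, ha, b, hb, rfl⟩ := mem_sup_prod (fun u hu m hm => hn.2 u hu m (hfp hm)) hg
    obtain ⟨k', hk', hkk⟩ := (hθ.2.2 k f hk hf).2
    refine ⟨k' * b, (mem_Fef_iff hfact hθ hf hq hqf).2 ⟨k', b, hk', ?_, ?_, hb, rfl⟩, ?_⟩
    · rw [hqe, hkk]
      exact inf_le_inf_right _ h1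
    · rw [hkk]
      exact inf_le_right
    · have h3 : e * k' = k := by
        apply hθ.1 _ _ (idem_mul_idem he hk') hk
        rw [natconn_mul hθ he hk', hkk]
        apply le_antisymm
        · exact sup_le h1 inf_le_left
        · intro c hc
          have hc' := h2 hc
          rw [hpe] at hc'
          obtain ⟨a, ha, b, hb, rfl⟩ := mem_sup_prod (fun u hu m hm => hn.2 u hu m (hfp hm)) hc'
          have hbk : b ∈ natconn k := by
            have := mul_mem (inv_mem (h1 ha)) hc
            simpa using this
          exact mul_mem ((le_sup_left : natconn e ≤ _) ha)
            ((le_sup_right : natconn k ⊓ natconn f ≤ _) ⟨hbk, hb⟩)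
      have h4 : k * (a : S) = k := h1 ha
      show e * (k' * b) = k * ((a * b : Sˣ) : S)
      rw [← mul_assoc, h3, Units.val_mul, ← mul_assoc, h4]
  · intro x hx y _
    obtain ⟨k, g, hk, h1, h2, hg, rfl⟩ := (mem_Fef_iff hfact hθ hf hq hqf).1 hx
    have hup : k * (g : S) ∈ upfilter p := (mem_up_iff hfact hp).2
      ⟨k, g, hk, mul_of_le hθ hp hk (h2.trans hfp), hfp hg, rfl⟩
    have h3 := hc.2 _ hup
    show e * (k * g * y) = e * (k * g) * (e * y)
    rw [h3, mul_assoc (k * (g : S)) e, ← mul_assoc e e, he.eq, ← mul_assoc, h3, mul_assoc]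

end MonoidPart

section JH

variable {S : Type*} [InverseMonoidWithZero S]

/-- The sublattice of images of idempotents. -/
def imL (hθ : NatconnDualIso S) : Sublattice (Subgroup Sˣ) where
  carrier := {H | ∃ e : S, IsIdempotentElem e ∧ natconn e = H}
  supClosed' := by
    rintro _ ⟨e, he, rfl⟩ _ ⟨f, hf, rfl⟩
    exact (hθ.2.2 e f he hf).1
  infClosed' := by
    rintro _ ⟨e, he, rfl⟩ _ ⟨f, hf, rfl⟩
    exact (hθ.2.2 e f he hf).2

/-- The Jordan–Hölder structure attached to a good relation. -/
def jhl (hθ : NatconnDualIso S) {N : Subgroup Sˣ → Subgroup Sˣ → Prop} (hN : GoodRel N) :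
    JordanHolderLattice (imL hθ) where
  IsMaximal x y := x < y ∧ N x.1 y.1 ∧ ∀ z : imL hθ, x ≤ z → N z.1 y.1 → z = x ∨ z = y
  lt_of_isMaximal h := h.1
  sup_eq_of_isMaximal := by
    intro x y z hx hy hne
    have hs : N (x ⊔ y).1 z.1 := hN.sup hx.2.1 hy.2.1
    rcases hx.2.2 (x ⊔ y) le_sup_left hs with h1 | h1
    · rcases hy.2.2 (x ⊔ y) le_sup_right hs with h2 | h2
      · exact absurd (h1.symm.trans h2) hne
      · exact h2
    · exact h1
  isMaximal_inf_left_of_isMaximal_sup := by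
    intro x y hx hy
    have hx1 : N x.1 (x.1 ⊔ y.1) := hx.2.1
    have hy1 : N y.1 (x.1 ⊔ y.1) := hy.2.1
    refine ⟨?_, hN.inf hx1 hy1, ?_⟩
    · refine lt_of_le_of_ne inf_le_left fun h => ?_
      have h' : x ≤ y := inf_eq_left.1 h
      exact hy.1.ne (sup_eq_right.2 h').symm
    · intro z hz hzx
      have hzx' : z ≤ x := (hN.nsub hzx).1
      have h1 : N (z ⊔ y).1 (x ⊔ y).1 := hN.supz hx1 hy1 hzx
      rcases hy.2.2 (z ⊔ y) le_sup_right h1 with h2 | h2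
      · left
        exact le_antisymm (le_inf hzx' (sup_eq_right.1 h2)) hz
      · right
        apply le_antisymm hzx'
        intro c hc
        have hc' : c ∈ (z ⊔ y : imL hθ).1 := h2 ▸ ((le_sup_left : x.1 ≤ x.1 ⊔ y.1) hc)
        have hc'' : c ∈ y.1 ⊔ z.1 := by
          rw [sup_comm]
          exact hc'
        obtain ⟨b, hb, a, ha, rfl⟩ := mem_sup_prod
          (fun u hu m hm => (hN.nsub hy1).2 u hu m ((hN.nsub hx1).1 (hzx' hm))) hc''
        have hbx : b ∈ x.1 := by
          have := mul_mem hc (inv_mem (hzx' ha))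
          simpa using this
        exact mul_mem (hz (show b ∈ (x ⊓ y : imL hθ).1 from ⟨hbx, hb⟩)) ha

/-- The idempotent representing an element of the sublattice. -/
noncomputable def rep (hθ : NatconnDualIso S) (x : imL hθ) : S := x.2.choose

theorem rep_idem (hθ : NatconnDualIso S) (x : imL hθ) : IsIdempotentElem (rep hθ x) :=
  x.2.choose_spec.1

theorem natconn_rep (hθ : NatconnDualIso S) (x : imL hθ) : natconn (rep hθ x) = x.1 :=
  x.2.choose_spec.2

/-- The series of a kind given by a relation `N`. -/
def NSeries (N : Subgroup Sˣ → Subgroup Sˣ → Prop) (n : ℕ) (c : ℕ → S) : Prop :=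
  c 0 = 0 ∧ c n = 1 ∧ (∀ i ≤ n, IsIdempotentElem (c i)) ∧
    ∀ i < n, N (natconn (c (i + 1))) (natconn (c i))

theorem comp_step (hθ : NatconnDualIso S) {N : Subgroup Sˣ → Subgroup Sˣ → Prop}
    (hN : GoodRel N) {n : ℕ} {c : ℕ → S} (hc : IsCompositionOf (NSeries N) n c) {i : ℕ}
    (hi : i < n) {z : S} (hz : IsIdempotentElem z) (h1 : natconn (c (i + 1)) ≤ natconn z)
    (h2 : N (natconn z) (natconn (c i))) :
    natconn z = natconn (c (i + 1)) ∨ natconn z = natconn (c i) := by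
  obtain ⟨⟨c0, cn, cid, cN⟩, cinj, cref⟩ := hc
  have anti : ∀ a b, a ≤ b → b ≤ n → natconn (c b) ≤ natconn (c a) := by
    intro a b hab
    induction b, hab using Nat.le_induction with
    | base => intro _; exact le_rfl
    | succ b hab ih =>
      intro hb
      exact ((hN.nsub (cN b (by omega))).1).trans (ih (by omega))
  let d : ℕ → S := fun j => if j ≤ i then c j else if j = i + 1 then z else c (j - 1)
  have d1 : ∀ j, j ≤ i → d j = c j := fun j hj => by simp [d, hj]
  have d2 : d (i + 1) = z := by simp [d]
  have d3 : ∀ j, i < j → d (j + 1) = c j := fun j hj => by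
    have a : ¬ (j + 1 ≤ i) := by omega
    have b : j ≠ i := by omega
    simp [d, a, b]
  have hd : NSeries N (n + 1) d := by
    refine ⟨?_, ?_, ?_, ?_⟩
    · rw [d1 0 (by omega), c0]
    · rw [d3 n hi, cn]
    · intro j hj
      rcases lt_trichotomy j (i + 1) with h | h | h
      · rw [d1 j (by omega)]
        exact cid j (by omega)
      · rw [h, d2]
        exact hz
      · obtain ⟨j, rfl⟩ : ∃ k, j = k + 1 := ⟨j - 1, by omega⟩
        rw [d3 j (by omega)]
        exact cid j (by omega)
    · intro j hj
      rcases lt_trichotomy j i with h | h | h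
      · rw [d1 j (by omega), d1 (j + 1) (by omega)]
        exact cN j (by omega)
      · subst h
        rw [d2, d1 j le_rfl]
        exact h2
      · rcases Nat.lt_or_ge (i + 1) j with h' | h'
        · obtain ⟨j, rfl⟩ : ∃ k, j = k + 1 := ⟨j - 1, by omega⟩
          rw [d3 (j + 1) (by omega), d3 j (by omega)]
          exact cN j (by omega)
        · obtain rfl : j = i + 1 := by omega
          rw [d2, d3 (i + 1) (by omega)]
          exact hN.mid (cN i hi) h1 h2
  obtain ⟨k, hk, hzk⟩ := cref (n + 1) d hd (by
    intro j hj
    rcases Nat.lt_or_ge i j with h | h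
    · exact ⟨j + 1, by omega, d3 j h⟩
    · exact ⟨j, by omega, d1 j h⟩) (i + 1) (by omega)
  rw [d2] at hzk
  subst hzk
  rcases Nat.lt_or_ge i k with h | h
  · left
    exact le_antisymm (anti _ _ h hk) h1
  · right
    exact le_antisymm (hN.nsub h2).1 (anti _ _ h (by omega))

/-- The composition series in the sense of Mathlib attached to ours. -/
def toCS (hθ : NatconnDualIso S) {N : Subgroup Sˣ → Subgroup Sˣ → Prop}
    (hN : GoodRel N) {n : ℕ} {c : ℕ → S} (hc : IsCompositionOf (NSeries N) n c) :
    @CompositionSeries (imL hθ) _ (jhl hθ hN) where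
  length := n
  toFun i := ⟨natconn (c (n - i.1)), c (n - i.1), hc.1.2.2.1 _ (by omega), rfl⟩
  step i := by
    obtain ⟨m, hm⟩ : ∃ m, n - i.1 = m + 1 := ⟨n - i.1 - 1, by omega⟩
    have hm' : n - (i.1 + 1) = m := by omega
    have hid := hc.1.2.2.1
    have hN1 := hc.1.2.2.2 m (by omega)
    show _ < _ ∧ _ ∧ _
    simp only [Fin.val_castSucc, Fin.val_succ, hm, hm']
    refine ⟨?_, hN1, ?_⟩
    · refine lt_of_le_of_ne (hN.nsub hN1).1 fun h => ?_
      have h' : natconn (c (m + 1)) = natconn (c m) := congrArg Subtype.val h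
      have h'' := hθ.1 _ _ (hid (m + 1) (by omega)) (hid m (by omega)) h'
      have := hc.2.1 _ (by omega) _ (by omega) h''
      omega
    · rintro ⟨_, z, hz, rfl⟩ h1 h2
      rcases comp_step hθ hN hc (by omega) hz h1 h2 with h | h
      · exact Or.inl (Subtype.ext h)
      · exact Or.inr (Subtype.ext h)

/-- Isomorphism of the factors. -/
def facIso (hθ : NatconnDualIso S) (a b : imL hθ × imL hθ) : Prop :=
  SubIso (Fef (rep hθ a.2) (rep hθ a.1)) (Fef (rep hθ b.2) (rep hθ b.1)) ∧
  SubIso (Fef (rep hθ b.2) (rep hθ b.1)) (Fef (rep hθ a.2) (rep hθ a.1))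

theorem main_iso (hfact : Factorizable S) (hθ : NatconnDualIso S)
    {N : Subgroup Sˣ → Subgroup Sˣ → Prop}
    (hN : GoodRel N) {n n' : ℕ} {c c' : ℕ → S} (hc : IsCompositionOf (NSeries N) n c)
    (hc' : IsCompositionOf (NSeries N) n' c') : SeriesIso n c n' c' := by
  let := jhl hθ hN
  have hJ := CompositionSeries.jordan_holder (toCS hθ hN hc) (toCS hθ hN hc')
    (by
      apply Subtype.ext
      show natconn (c n) = natconn (c' n')
      rw [hc.1.2.1, hc'.1.2.1])
    (by
      apply Subtype.ext
      show natconn (c (n - n)) = natconn (c' (n' - n'))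
      rw [Nat.sub_self, Nat.sub_self, hc.1.1, hc'.1.1])
  obtain ⟨f, hf⟩ := hJ
  change Fin n ≃ Fin n' at f
  have hlen : n = n' := by simpa using Fintype.card_congr f
  subst hlen
  have hrep : ∀ (e : S) (he : IsIdempotentElem e) (x : imL hθ), x.1 = natconn e →
      rep hθ x = e := fun e he x hx =>
    hθ.1 _ _ (rep_idem hθ x) he ((natconn_rep hθ x).trans hx)
  have hf' : ∀ i : Fin n, SubIso (Fef (c (n - (i.1 + 1))) (c (n - i.1)))
      (Fef (c' (n - ((f i).1 + 1))) (c' (n - (f i).1))) := by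
    intro i
    have h := JordanHolderLattice.Iso.rel (facIso hθ)
      (fun {x} => ⟨SubIso.rfl' _, SubIso.rfl' _⟩)
      (fun {x y} h => ⟨h.2, h.1⟩)
      (fun {x y z} h h' => ⟨h.1.trans' h'.1, h'.2.trans' h.2⟩)
      (fun {x y} h => by
        have hn : NSub x.1 (x.1 ⊔ y.1) := hN.nsub h.2.1
        have hpe : natconn (rep hθ (x ⊔ y)) = natconn (rep hθ x) ⊔ natconn (rep hθ y) := by
          simp only [natconn_rep]
          rfl
        have hqe : natconn (rep hθ (x ⊓ y)) = natconn (rep hθ x) ⊓ natconn (rep hθ y) := by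
          simp only [natconn_rep]
          rfl
        have hs := second_iso_F hfact hθ (rep_idem hθ x) (rep_idem hθ y) (rep_idem hθ (x ⊔ y))
          (rep_idem hθ (x ⊓ y)) hpe hqe (by rw [hpe, natconn_rep, natconn_rep]; exact hn)
        refine ⟨SubIso.symm' (Fef_mul hfact hθ (rep_idem hθ _) (rep_idem hθ _) ?_) hs, hs⟩
        rw [hqe, natconn_rep, natconn_rep]
        exact ⟨inf_le_right, fun u hu g hg => ⟨hn.2 u hu.1 g ((le_sup_right : y.1 ≤ _) hg),
          y.1.mul_mem (y.1.mul_mem hg hu.2) (y.1.inv_mem hg)⟩⟩) (hf i)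
    have h := h.1
    simp only at h
    rw [hrep (c (n - (i.1 + 1))) (hc.1.2.2.1 _ (by omega)) _ rfl,
      hrep (c (n - i.1)) (hc.1.2.2.1 _ (by omega)) _ rfl,
      hrep (c' (n - ((f i).1 + 1))) (hc'.1.2.2.1 _ (by omega)) _ rfl,
      hrep (c' (n - (f i).1)) (hc'.1.2.2.1 _ (by omega)) _ rfl] at h
    exact h
  refine ⟨rfl, fun i => if h : i < n then (Fin.rev (f (Fin.rev ⟨i, h⟩))).1 else 0, ⟨?_, ?_, ?_⟩, ?_⟩
  · intro i hi
    have hi : i < n := hi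
    simp only [hi, dif_pos]
    exact (Fin.rev _).2
  · intro i hi j hj hij
    have hi : i < n := hi
    have hj : j < n := hj
    simp only [hi, hj, dif_pos] at hij
    have := Fin.rev_injective (f.injective (Fin.rev_injective (Fin.ext hij)))
    exact congrArg Fin.val this
  · intro j hj
    have hj : j < n := hj
    refine ⟨(Fin.rev (f.symm (Fin.rev ⟨j, hj⟩))).1, (Fin.rev _).2, ?_⟩
    have hk : ∀ k : Fin n, (if h : k.1 < n then (Fin.rev (f (Fin.rev ⟨k.1, h⟩))).1 else 0)
        = (Fin.rev (f (Fin.rev k))).1 := fun k => dif_pos k.2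
    refine (hk _).trans ?_
    rw [Fin.rev_rev, Equiv.apply_symm_apply, Fin.rev_rev]
  · intro i hi
    simp only [hi, dif_pos]
    have h := hf' (Fin.rev ⟨i, hi⟩)
    have hr := (f (Fin.rev ⟨i, hi⟩)).2
    have e1 : n - ((Fin.rev ⟨i, hi⟩ : Fin n).1 + 1) = i := by
      rw [Fin.val_rev]
      simp only
      omega
    have e2 : n - (Fin.rev ⟨i, hi⟩ : Fin n).1 = i + 1 := by omega
    have e3 : n - (f (Fin.rev ⟨i, hi⟩)).1 = (Fin.rev (f (Fin.rev ⟨i, hi⟩))).1 + 1 := by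
      rw [Fin.val_rev]
      omega
    have e4 : n - ((f (Fin.rev ⟨i, hi⟩)).1 + 1) = (Fin.rev (f (Fin.rev ⟨i, hi⟩))).1 := by
      rw [Fin.val_rev]
    rw [e1, e2, e3, e4] at h
    exact h

theorem sub_series_iff (hfact : Factorizable S) (hθ : NatconnDualIso S) :
    (IsSubcentralSeries : ℕ → (ℕ → S) → Prop) = NSeries NSub := by
  funext n c
  apply propext
  constructor
  · rintro ⟨h0, h1, h2, h3⟩
    exact ⟨h0, h1, h2, fun i hi =>
      (central_iff hfact hθ (h2 i (by omega)) (h2 (i + 1) (by omega))).1 (h3 i hi)⟩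
  · rintro ⟨h0, h1, h2, h3⟩
    exact ⟨h0, h1, h2, fun i hi =>
      (central_iff hfact hθ (h2 i (by omega)) (h2 (i + 1) (by omega))).2 (h3 i hi)⟩

theorem central_univ_iff (hfact : Factorizable S) (hθ : NatconnDualIso S) {f : S}
    (hf : IsIdempotentElem f) : CentralIn Set.univ f ↔ (natconn f).Normal := by
  have hz : IsIdempotentElem (0 : S) := InverseMonoidWithZero.zero_mul 0
  have hu : upfilter (0 : S) = Set.univ := by
    ext s
    simp only [Set.mem_univ, iff_true]
    exact (natLe_iff hz).2 (InverseMonoidWithZero.zero_mul s)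
  have ht : ∀ g : Sˣ, g ∈ natconn (0 : S) := fun g => InverseMonoidWithZero.zero_mul _
  rw [← hu, central_iff hfact hθ hz hf]
  constructor
  · intro h
    exact ⟨fun u hu g => h.2 u hu g (ht g)⟩
  · intro h
    exact ⟨fun g _ => ht g, fun u hu g _ => h.conj_mem u hu g⟩

theorem cen_series_iff (hfact : Factorizable S) (hθ : NatconnDualIso S) :
    (IsCentralSeries : ℕ → (ℕ → S) → Prop) = NSeries NCen := by
  have hz : IsIdempotentElem (0 : S) := InverseMonoidWithZero.zero_mul 0
  have hz' : (natconn (0 : S)).Normal := (central_univ_iff hfact hθ hz).1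
    ⟨trivial, fun s _ =>
      (InverseMonoidWithZero.zero_mul s).trans (InverseMonoidWithZero.mul_zero s).symm⟩
  funext n c
  apply propext
  constructor
  · rintro ⟨h0, h1, h2, h3, h4⟩
    have key : ∀ i ≤ n, (natconn (c i)).Normal := by
      intro i hi
      rcases i with _ | i
      · rw [h0]
        exact hz'
      · exact (central_univ_iff hfact hθ (h2 _ hi)).1 (h4 i hi)
    exact ⟨h0, h1, h2, fun i hi => ⟨(hθ.2.1 _ _ (h2 i (by omega)) (h2 (i + 1) hi)).1 (h3 i hi),
      key _ hi, key _ (by omega)⟩⟩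
  · rintro ⟨h0, h1, h2, h3⟩
    exact ⟨h0, h1, h2,
      fun i hi => (hθ.2.1 _ _ (h2 i (by omega)) (h2 (i + 1) hi)).2 (h3 i hi).1,
      fun i hi => (central_univ_iff hfact hθ (h2 _ hi)).2 (h3 i hi).2.1⟩

end JH

/-- analogue of the Jordan–Hölder theorem: In a factorizable inverse
monoid with zero whose natural connection is a dual isomorphism onto a sublattice of
the lattice of subgroups of the group of units, any two composition subcentral
(resp. composition central) idempotent series are isomorphic. -/
theorem stmt_9 {S : Type*} [InverseMonoidWithZero S] (hfact : Factorizable S)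
    (hθ : NatconnDualIso S) :
    (∀ (n : ℕ) (c : ℕ → S) (n' : ℕ) (c' : ℕ → S),
      IsCompositionOf IsSubcentralSeries n c → IsCompositionOf IsSubcentralSeries n' c' →
      SeriesIso n c n' c') ∧
    (∀ (n : ℕ) (c : ℕ → S) (n' : ℕ) (c' : ℕ → S),
      IsCompositionOf IsCentralSeries n c → IsCompositionOf IsCentralSeries n' c' →
      SeriesIso n c n' c') := by
  constructor
  · intro n c n' c' h h'
    rw [sub_series_iff hfact hθ] at h h'
    exact main_iso hfact hθ goodSub h h'
  · intro n c n' c' h h'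
    rw [cen_series_iff hfact hθ] at h h'
    exact main_iso hfact hθ goodCen h h'
end

section
/- Let S be a factorizable inverse monoid with zero whose natural connection θ is a dual isomorphism from the semilattice of idempotents E onto a sublattice of L(G), where G is the group of units, and let Γ: 0 = e₀ ≤ e₁ ≤ ⋯ ≤ eₙ = 1 be a chain of central idempotents of S. Then Γ is a G-nilpotent series if and only if UF_{e_i,e_{i+1}} ⊆ Z(S) for all 0 ≤ i ≤ n−1, and Γ is a G-solvable series if and only if UF_{e_i,e_{i+1}} is an abelian group for all 0 ≤ i ≤ n−1. -/
theorem im_idem_comm {S : Type*} [InverseMonoid S] {e f : S} (he : IsIdempotentElem e)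
    (hf : IsIdempotentElem f) : e * f = f * e := by
  have key : ∀ e f : S, IsIdempotentElem e → IsIdempotentElem f → IsIdempotentElem (e * f) := by
    intro e f he hf
    have he' : ∀ z, e * (e * z) = e * z := fun z => by rw [← mul_assoc, he.eq]
    have hf' : ∀ z, f * (f * z) = f * z := fun z => by rw [← mul_assoc, hf.eq]
    obtain ⟨x, hx⟩ : ∃ x : S, x = (e * f)⁻¹ := ⟨_, rfl⟩
    have a1 := InverseMonoid.mul_inv_mul (e * f)
    have a2 := InverseMonoid.inv_mul_inv (e * f)
    rw [← hx] at a1 a2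
    simp only [mul_assoc] at a1 a2
    have a3 : ∀ z, x * (e * (f * (x * z))) = x * z := fun z => by
      have := congrArg (· * z) a2
      simpa only [mul_assoc] using this
    have h1 : f * x * e = x := by
      rw [hx]
      apply InverseMonoid.inv_unique
      · rw [← hx]; simp only [mul_assoc, he', hf']; exact a1
      · rw [← hx]; simp only [mul_assoc, he', hf', a3]
    have h2 : x * x = x := by
      calc x * x = (f * x * e) * (f * x * e) := by rw [h1]
        _ = f * x * e := by simp only [mul_assoc, a3]
        _ = x := h1
    have h3 : x = x⁻¹ := InverseMonoid.inv_unique x x (by rw [h2, h2]) (by rw [h2, h2])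
    have h4 : e * f = x⁻¹ := InverseMonoid.inv_unique x (e * f)
      (by simpa only [mul_assoc] using a2) (by simpa only [mul_assoc] using a1)
    rw [h4, ← h3]; exact h2
  have he' : ∀ z, e * (e * z) = e * z := fun z => by rw [← mul_assoc, he.eq]
  have hf' : ∀ z, f * (f * z) = f * z := fun z => by rw [← mul_assoc, hf.eq]
  have k1 := (key e f he hf).eq
  have k2 := (key f e hf he).eq
  have h1 : f * e = (e * f)⁻¹ := by
    apply InverseMonoid.inv_unique
    · simp only [mul_assoc, he', hf'] at k1 ⊢; exact k1
    · simp only [mul_assoc, he', hf'] at k2 ⊢; exact k2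
  have h2 : e * f = (e * f)⁻¹ :=
    InverseMonoid.inv_unique _ _ (by rw [k1, k1]) (by rw [k1, k1])
  rw [h1, ← h2]

theorem natLe_mul {S : Type*} [Monoid S] {p q : S} (hq : IsIdempotentElem q)
    (h : NatLe p q) : p * q = p := by
  obtain ⟨k, -, rfl⟩ := h
  rw [mul_assoc, hq.eq]

theorem up_decomp {S : Type*} [InverseMonoid S] (hfact : Factorizable S) {e s : S}
    (he : IsIdempotentElem e) (hc : ∀ s, e * s = s * e) (h : NatLe e s) :
    ∃ (k : S) (g : Sˣ), IsIdempotentElem k ∧ s = k * g ∧ e * k = e ∧ e * (g : S) = e := by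
  obtain ⟨k, hk, hks⟩ := h
  obtain ⟨h, _, hh, ⟨g, rfl⟩, rfl⟩ := hfact s
  have h1 : k * h = e * (↑g⁻¹ : S) := by
    rw [hks]; simp [mul_assoc]
  have h2 : IsIdempotentElem (k * h) := hk.mul_of_commute (im_idem_comm hk hh) hh
  have h3 : e * (↑g⁻¹ : S) * ↑g⁻¹ = e * ↑g⁻¹ := by
    have := h2.eq
    rw [h1] at this
    calc _ = e * (↑g⁻¹ : S) * (e * ↑g⁻¹) := by
          rw [← mul_assoc, mul_assoc e _ e, ← hc (↑g⁻¹ : S), ← mul_assoc e e, he.eq]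
      _ = _ := this
  have h4 : e * (↑g⁻¹ : S) = e := by
    have := congrArg (· * (g : S)) h3
    simpa [mul_assoc] using this
  have h5 : k * h = e := h1.trans h4
  refine ⟨h, g, hh, rfl, ?_, ?_⟩
  · rw [← h5, mul_assoc, hh.eq]
  · conv_lhs => rw [← h4]
    simp [mul_assoc]

theorem conj_le {S : Type*} [InverseMonoid S] (hθ : NatconnDualIso S) {e f p : S}
    (hp : IsIdempotentElem p) (hep : e * p = e) (hpf : p * f = p) (g : Sˣ)
    (hg : ∀ k : Sˣ, e * (k : S) = e → f * k * (g : S) = g * (f * k)) :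
    (↑g⁻¹ * p * g : S) * p = ↑g⁻¹ * p * g := by
  have hq : IsIdempotentElem (↑g⁻¹ * p * g : S) := by
    change (↑g⁻¹ * p * g : S) * (↑g⁻¹ * p * g) = _
    simp only [mul_assoc, Units.mul_inv_cancel_left]
    rw [← mul_assoc p p, hp.eq]
  apply natLe_mul hp
  rw [hθ.2.1 _ _ hq hp]
  intro k hk
  have hk : p * (k : S) = p := hk
  have hek : e * (k : S) = e := by rw [← hep, mul_assoc, hk]
  change (↑g⁻¹ * p * g : S) * k = ↑g⁻¹ * p * g
  have hgf := hg 1 (by simp)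
  simp only [Units.val_one, mul_one] at hgf
  have : p * (g : S) * k = p * g := by
    calc p * (g : S) * k = p * (f * g) * k := by rw [← mul_assoc, hpf]
      _ = p * (g * (f * k)) := by rw [hgf]; simp only [mul_assoc]
      _ = p * (f * k * g) := by rw [hg k hek]
      _ = p * f * k * g := by simp only [mul_assoc]
      _ = p * g := by rw [hpf, hk]
  calc (↑g⁻¹ * p * g : S) * k = ↑g⁻¹ * (p * g * k) := by simp only [mul_assoc]
    _ = _ := by rw [this, mul_assoc]

theorem idem_comm_unit {S : Type*} [InverseMonoid S] (hθ : NatconnDualIso S) {e f p : S}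
    (hp : IsIdempotentElem p) (hep : e * p = e) (hpf : p * f = p) (g : Sˣ)
    (hg : ∀ k : Sˣ, e * (k : S) = e → f * k * (g : S) = g * (f * k)) :
    p * g = g * p := by
  have h1 := conj_le hθ hp hep hpf g hg
  have hg' : ∀ k : Sˣ, e * (k : S) = e → f * k * (↑g⁻¹ : S) = ↑g⁻¹ * (f * k) := by
    intro k hk
    have := congrArg (fun z => (↑g⁻¹ : S) * z * ↑g⁻¹) (hg k hk)
    simp only [mul_assoc, Units.inv_mul_cancel_left, Units.mul_inv, mul_one] at this
    simp only [mul_assoc]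
    exact this.symm
  have h2 := conj_le hθ hp hep hpf g⁻¹ hg'
  rw [inv_inv] at h2
  have hq : IsIdempotentElem (↑g⁻¹ * p * g : S) := by
    change (↑g⁻¹ * p * g : S) * (↑g⁻¹ * p * g) = _
    simp only [mul_assoc, Units.mul_inv_cancel_left]
    rw [← mul_assoc p p, hp.eq]
  have h3 : p * (↑g⁻¹ * p * g : S) = p := by
    have := congrArg (fun z => (↑g⁻¹ : S) * z * ↑g) h2
    simpa only [mul_assoc, Units.inv_mul_cancel_left, Units.inv_mul, mul_one] using this
  rw [← im_idem_comm hp hq, h3] at h1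
  calc p * (g : S) = g * (↑g⁻¹ * p * g) := by simp only [mul_assoc, Units.mul_inv_cancel_left]
    _ = g * p := by rw [← h1]

theorem unit_mem_UF {S : Type*} [InverseMonoid S] {e f : S} (he : IsIdempotentElem e)
    (hf : IsIdempotentElem f) (hcf : ∀ s, f * s = s * f) (g : Sˣ) (hg : e * (g : S) = e) :
    f * (g : S) ∈ UFef e f := by
  have hg' : e * (↑g⁻¹ : S) = e := by
    conv_lhs => rw [← hg]
    simp [mul_assoc]
  have hm : ∀ a b : Sˣ, (a * b = 1) → f * (a : S) * (f * b) = f := by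
    intro a b hab
    rw [mul_assoc, ← mul_assoc (a : S), ← hcf, mul_assoc, ← mul_assoc, hf.eq, ← Units.val_mul, hab]
    simp
  exact ⟨⟨g, ⟨e, he, hg.symm⟩, rfl⟩, f * (↑g⁻¹ : S), ⟨_, ⟨e, he, hg'.symm⟩, rfl⟩,
    hm _ _ (by simp), hm _ _ (by simp)⟩

/-- Let `Γ : 0 = e₀ ≤ e₁ ≤ ⋯ ≤ eₙ = 1` be a chain of central idempotents
of a factorizable inverse monoid with zero whose natural connection is a dual
isomorphism onto a sublattice of the lattice of subgroups of the group of units.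
Then `Γ` is a `G`-nilpotent series iff `UF_{eᵢ,eᵢ₊₁} ⊆ Z(S)` for all `i < n`, and `Γ`
is a `G`-solvable series iff each `UF_{eᵢ,eᵢ₊₁}` is an abelian group. -/
theorem stmt_11 {S : Type*} [InverseMonoidWithZero S] (hfact : Factorizable S)
    (hθ : NatconnDualIso S) (n : ℕ) (c : ℕ → S)
    (h0 : c 0 = 0) (h1 : c n = 1)
    (hidem : ∀ i ≤ n, IsIdempotentElem (c i) ∧ CentralIn Set.univ (c i))
    (hchain : ∀ i < n, NatLe (c i) (c (i + 1))) :
    (GNilpotentSeries n c ↔ ∀ i < n, UFef (c i) (c (i + 1)) ⊆ ZIn Set.univ) ∧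
    (GSolvableSeries n c ↔
      ∀ i < n, ∀ x ∈ UFef (c i) (c (i + 1)), ∀ y ∈ UFef (c i) (c (i + 1)),
        x * y = y * x) := by
  have hI : ∀ i < n, IsIdempotentElem (c i) ∧ (∀ s, c i * s = s * c i) ∧
      IsIdempotentElem (c (i+1)) ∧ (∀ s, c (i+1) * s = s * c (i+1)) ∧ c i * c (i+1) = c i := by
    intro i hi
    have a := hidem i hi.le
    have b := hidem (i+1) hi
    exact ⟨a.1, fun s => a.2.2 s trivial, b.1, fun s => b.2.2 s trivial,
      natLe_mul b.1 (hchain i hi)⟩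
  refine ⟨⟨fun h i hi x hx => ⟨trivial, fun s _ => ?_⟩, fun h => ⟨h0, h1, hidem, hchain, ?_⟩⟩,
    ⟨fun h i hi x hx y hy => h.2.2.2.2 i hi x hx.1 y hy.1, fun h => ⟨h0, h1, hidem, hchain, ?_⟩⟩⟩
  · obtain ⟨he, hce, hf, hcf, hef⟩ := hI i hi
    have hz := (h.2.2.2.2 i hi hx.1).2 (c (i+1) * s)
      ⟨s, ⟨0, InverseMonoidWithZero.zero_mul 0, (InverseMonoidWithZero.zero_mul s).symm⟩, rfl⟩
    obtain ⟨t, -, rfl⟩ := hx.1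
    have hft : c (i+1) * t * c (i+1) = c (i+1) * t := by
      rw [← hcf, ← mul_assoc, hf.eq]
    simp only at hz ⊢
    rw [← mul_assoc, hft, hcf s, mul_assoc s, ← mul_assoc (c (i+1)) (c (i+1)), hf.eq] at hz
    exact hz
  · intro i hi x hx
    obtain ⟨he, hce, hf, hcf, hef⟩ := hI i hi
    obtain ⟨s, hs, rfl⟩ := hx
    refine ⟨⟨s, ⟨0, InverseMonoidWithZero.zero_mul 0,
      (InverseMonoidWithZero.zero_mul s).symm⟩, rfl⟩, fun y _ => ?_⟩
    obtain ⟨k, g, hk, rfl, hek, heg⟩ := up_decomp hfact he hce hs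
    have hcen : ∀ g : Sˣ, c i * (g : S) = c i → ∀ s, c (i+1) * (g : S) * s = s * (c (i+1) * g) :=
      fun g hg s => (h i hi (unit_mem_UF he hf hcf g hg)).2 s trivial
    have hp : IsIdempotentElem (k * c (i+1)) := hk.mul_of_commute (hcf k).symm hf
    have hpu : ∀ u : Sˣ, k * c (i+1) * u = u * (k * c (i+1)) := fun u =>
      idem_comm_unit hθ (e := c i) (f := c (i+1)) hp (by rw [← mul_assoc, hek, hef])
        (by rw [mul_assoc, hf.eq]) u (fun v hv => hcen v hv u)
    have hpc : ∀ y, k * c (i+1) * y = y * (k * c (i+1)) := by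
      intro y
      obtain ⟨a, _, ha, ⟨u, rfl⟩, rfl⟩ := hfact y
      rw [← mul_assoc, im_idem_comm hp ha, mul_assoc, hpu, mul_assoc]
    have e1 : c (i+1) * (k * g) = k * c (i+1) * (c (i+1) * g) := by
      rw [← mul_assoc, hcf k, ← mul_assoc (k * c (i+1)), mul_assoc k (c (i+1)) (c (i+1)), hf.eq]
    change c (i+1) * (k * g) * y = y * (c (i+1) * (k * g))
    rw [e1, mul_assoc, hcen g heg, ← mul_assoc, hpc, mul_assoc]
  · intro i hi x hx y hy
    obtain ⟨he, hce, hf, hcf, hef⟩ := hI i hi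
    obtain ⟨s, hs, rfl⟩ := hx
    obtain ⟨t, ht, rfl⟩ := hy
    obtain ⟨k, g, hk, rfl, hek, heg⟩ := up_decomp hfact he hce hs
    obtain ⟨l, u, hl, rfl, hel, heu⟩ := up_decomp hfact he hce ht
    have hcen : ∀ g v : Sˣ, c i * (g : S) = c i → c i * (v : S) = c i →
        c (i+1) * (g : S) * v = v * (c (i+1) * g) := by
      intro g v hg hv
      have := h i hi _ (unit_mem_UF he hf hcf g hg) _ (unit_mem_UF he hf hcf v hv)
      have hr : ∀ a b : S, c (i+1) * a * (c (i+1) * b) = c (i+1) * a * b := by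
        intro a b
        rw [← mul_assoc, ← hcf (c (i+1) * a), ← mul_assoc (c (i+1)), hf.eq]
      rw [hr, hr] at this
      rw [this, hcf v, mul_assoc]
    have hpu : ∀ (k : S) (u : Sˣ), IsIdempotentElem k → c i * k = c i → c i * (u : S) = c i →
        k * c (i+1) * u = u * (k * c (i+1)) := fun k u hk hek hu =>
      idem_comm_unit hθ (e := c i) (f := c (i+1)) (hk.mul_of_commute (hcf k).symm hf)
        (by rw [← mul_assoc, hek, hef])
        (by rw [mul_assoc, hf.eq]) u (fun v hv => hcen v u hv hu)
    have e1 : ∀ (k : S) (g : Sˣ), c (i+1) * (k * g) = k * c (i+1) * (c (i+1) * g) := by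
      intro k g
      rw [← mul_assoc, hcf k, ← mul_assoc (k * c (i+1)), mul_assoc k (c (i+1)) (c (i+1)), hf.eq]
    have hid : ∀ k : S, IsIdempotentElem k → IsIdempotentElem (k * c (i+1)) := fun k hk =>
      hk.mul_of_commute (hcf k).symm hf
    have hA : ∀ (k : S) (u : Sˣ), IsIdempotentElem k → c i * k = c i → c i * (u : S) = c i →
        Commute (k * c (i+1)) (c (i+1) * u) := fun k u hk hek hu =>
      Commute.mul_right (im_idem_comm (hid k hk) hf) (hpu k u hk hek hu)
    have hB : Commute (c (i+1) * (g : S)) (c (i+1) * u) :=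
      h i hi _ (unit_mem_UF he hf hcf g heg) _ (unit_mem_UF he hf hcf u heu)
    change Commute (c (i+1) * (k * g)) (c (i+1) * (l * u))
    rw [e1, e1]
    exact Commute.mul_left
      (Commute.mul_right (im_idem_comm (hid k hk) (hid l hl)) (hA k u hk hek heu))
      (Commute.mul_right (hA l g hl hel heg).symm hB)
end

section
/- Let S be a G-nilpotent factorizable inverse monoid with zero whose natural connection θ is a dual isomorphism from the semilattice of idempotents E onto a sublattice of L(G), where G is the group of units, and let 0 = e₀ ≤ e₁ ≤ ⋯ ≤ eₙ = 1 be a G-nilpotent series of S. Then every idempotent in the interval [e_i, e_{i+1}] is central in S for every 0 ≤ i ≤ n−1; moreover, if e ∈ [e_i, e_{i+1}], then 0 = e₀ ≤ e₁ ≤ ⋯ ≤ e_i ≤ e ≤ e_{i+1} ≤ ⋯ ≤ eₙ = 1 is also a G-nilpotent series of S. -/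
/-- If `0 = e₀ ≤ ⋯ ≤ eₙ = 1` is a `G`-nilpotent series of a `G`-nilpotent
factorizable inverse monoid with zero whose natural connection is a dual isomorphism
onto a sublattice of the lattice of subgroups of the group of units, then every
idempotent in the interval `[eᵢ, eᵢ₊₁]` is central in `S`, and inserting such an
idempotent yields again a `G`-nilpotent series. -/
theorem stmt_12 {S : Type*} [InverseMonoidWithZero S] (hfact : Factorizable S)
    (hθ : NatconnDualIso S) (n : ℕ) (c : ℕ → S) (hΓ : GNilpotentSeries n c) :
    ∀ i < n, ∀ e : S, IsIdempotentElem e → NatLe (c i) e → NatLe e (c (i + 1)) →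
      CentralIn Set.univ e ∧
      GNilpotentSeries (n + 1)
        (fun j => if j ≤ i then c j else if j = i + 1 then e else c (j - 1)) := by
  obtain ⟨h0, h1, hc, hle, hF⟩ := hΓ
  intro i hi e he hie hei
  have hZ := hF i hi
  obtain ⟨hf, -, hfc⟩ := hc (i + 1) (by omega)
  obtain ⟨hci, -, hcc⟩ := hc i (by omega)
  have hef : c (i + 1) * e = e := by
    obtain ⟨b, hb, hb'⟩ := hei
    rw [hfc e trivial, hb', mul_assoc, hf.eq]
  have hcie : c i * e = c i := by
    obtain ⟨b, hb, hb'⟩ := hie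
    rw [hb', mul_assoc, he.eq]
  have hzero : ∀ s : S, NatLe 0 s := fun s =>
    ⟨0, InverseMonoidWithZero.zero_mul 0, (InverseMonoidWithZero.zero_mul s).symm⟩
  have key : ∀ t : S, NatLe (c i) t → ∀ s : S,
      (c (i + 1) * t) * (c (i + 1) * s) = (c (i + 1) * s) * (c (i + 1) * t) := by
    intro t ht s
    exact (hZ ⟨t, ht, rfl⟩).2 _ ⟨s, hzero s, rfl⟩
  have hec : ∀ s : S, e * s = s * e := by
    intro s
    have h := key e hie s
    rw [hef] at h
    calc e * s = c (i + 1) * e * s := by rw [hef]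
      _ = e * (c (i + 1) * s) := by rw [hfc e trivial, mul_assoc]
      _ = c (i + 1) * s * e := h
      _ = s * (c (i + 1) * e) := by rw [hfc s trivial, mul_assoc]
      _ = s * e := by rw [hef]
  have A : Fef (c i) e ⊆ ZIn (Fef 0 e) := by
    rintro _ ⟨t, ht, rfl⟩
    refine ⟨⟨t, hzero t, rfl⟩, ?_⟩
    rintro _ ⟨s, -, rfl⟩
    have hx : ∀ t : S, e * t = e * (c (i + 1) * t) := by
      intro t
      rw [← mul_assoc, ← hfc e trivial, hef]
    have hy : ∀ u v : S, (e * u) * (e * v) = e * (u * v) := by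
      intro u v
      rw [hec u, mul_assoc, ← mul_assoc e e v, he.eq, ← mul_assoc, ← hec u, mul_assoc]
    show (e * t) * (e * s) = (e * s) * (e * t)
    rw [hx t, hx s, hy, hy, key t ht s]
  have B : Fef e (c (i + 1)) ⊆ ZIn (Fef 0 (c (i + 1))) := by
    rintro _ ⟨t, ⟨b, hb, hbt⟩, rfl⟩
    refine hZ ⟨t, ⟨c i * b, ?_, ?_⟩, rfl⟩
    · show c i * b * (c i * b) = c i * b
      rw [hcc b trivial, mul_assoc, ← mul_assoc (c i) b, hcc b trivial, mul_assoc, hci.eq,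
        ← mul_assoc, hb.eq]
    · rw [mul_assoc, ← hbt, hcie]
  refine ⟨⟨trivial, fun s _ => hec s⟩, ?_, ?_, ?_, ?_, ?_⟩
  · simpa using h0
  · have a1 : ¬ (n + 1 ≤ i) := by omega
    have a2 : ¬ (n = i) := by omega
    simpa [a1, a2] using h1
  · intro j hj
    dsimp only
    split_ifs with a1 a2
    · exact hc j (by omega)
    · exact ⟨he, trivial, fun s _ => hec s⟩
    · exact hc (j - 1) (by omega)
  · intro j hj
    rcases lt_trichotomy j i with h | h | h
    · have a1 : j ≤ i := by omega
      have a2 : j + 1 ≤ i := by omega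
      simpa only [a1, a2, if_true] using hle j (by omega)
    · subst h
      simpa using hie
    · rcases eq_or_ne j (i + 1) with h' | h'
      · subst h'
        simpa using hei
      · have a1 : ¬ j ≤ i := by omega
        have a2 : ¬ j + 1 ≤ i := by omega
        have a3 : ¬ j + 1 = i + 1 := by omega
        have := hle (j - 1) (by omega)
        rw [show j - 1 + 1 = j by omega] at this
        simpa only [a1, a2, a3, h', if_false, Nat.add_sub_cancel] using this
  · intro j hj
    rcases lt_trichotomy j i with h | h | h
    · have a1 : j ≤ i := by omega
      have a2 : j + 1 ≤ i := by omega
      simpa only [a1, a2, if_true] using hF j (by omega)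
    · subst h
      simpa using A
    · rcases eq_or_ne j (i + 1) with h' | h'
      · subst h'
        simpa using B
      · have a1 : ¬ j ≤ i := by omega
        have a2 : ¬ j + 1 ≤ i := by omega
        have a3 : ¬ j + 1 = i + 1 := by omega
        have := hF (j - 1) (by omega)
        rw [show j - 1 + 1 = j by omega] at this
        simpa only [a1, a2, a3, h', if_false, Nat.add_sub_cancel] using this
end

section
/- Let S be a G-nilpotent (resp. G-solvable) factorizable inverse monoid with zero, with group of units G, of G-nilpotent length n (resp. G-solvable length n), whose natural connection θ is a dual isomorphism from the semilattice of idempotents onto a sublattice of L(G). Then G is a nilpotent group of nilpotency class at most n (resp. a solvable group of derived length at most n). -/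
/-- If `c * g` and `c * h` commute for a central idempotent `c`, the commutator of the units
`g` and `h` lies in `natconn c`. -/
theorem comm_mem_natconn {S : Type*} [Monoid S] {c : S} (hi : IsIdempotentElem c)
    (hc : CentralIn Set.univ c) (g h : Sˣ)
    (H : (c * (g : S)) * (c * (h : S)) = (c * (h : S)) * (c * (g : S))) :
    g * h * g⁻¹ * h⁻¹ ∈ natconn c := by
  have key : ∀ a b : S, (c * a) * (c * b) = c * (a * b) := by
    intro a b
    have h1 : a * c = c * a := (hc.2 a (Set.mem_univ _)).symm
    calc (c * a) * (c * b) = c * (a * c) * b := by simp only [mul_assoc]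
      _ = (c * c) * (a * b) := by rw [h1]; simp only [mul_assoc]
      _ = c * (a * b) := by rw [hi.eq]
  rw [key, key] at H
  change c * ((g * h * g⁻¹ * h⁻¹ : Sˣ) : S) = c
  calc c * ((g * h * g⁻¹ * h⁻¹ : Sˣ) : S)
      = (c * ((g : S) * h)) * ((g⁻¹ * h⁻¹ : Sˣ) : S) := by
        simp only [Units.val_mul, mul_assoc]
    _ = c * ((h * g * (g⁻¹ * h⁻¹) : Sˣ) : S) := by
        rw [H]; simp only [Units.val_mul, mul_assoc]
    _ = c := by simp

/-- Multiples of elements of `natconn e` lie in `F_{e,f}`. -/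
theorem mem_Fef {S : Type*} [Monoid S] {e : S} (f : S) (hi : IsIdempotentElem e) {g : Sˣ}
    (hg : e * (g : S) = e) : f * (g : S) ∈ Fef e f :=
  ⟨g, ⟨e, hi, hg.symm⟩, rfl⟩

/-- If `S` is a `G`-nilpotent (resp. `G`-solvable) factorizable inverse
monoid with zero of `G`-nilpotent (resp. `G`-solvable) length `n`, whose natural
connection is a dual isomorphism onto a sublattice of the lattice of subgroups of the
group of units, then the group of units is nilpotent of class at most `n`
(resp. solvable of derived length at most `n`). -/
theorem stmt_13 {S : Type*} [InverseMonoidWithZero S] (hfact : Factorizable S)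
    (hθ : NatconnDualIso S) (n : ℕ) :
    ((∃ c : ℕ → S, GNilpotentSeries n c) → (∀ (m : ℕ) (c : ℕ → S), GNilpotentSeries m c → n ≤ m) →
      upperCentralSeries Sˣ n = ⊤) ∧
    ((∃ c : ℕ → S, GSolvableSeries n c) → (∀ (m : ℕ) (c : ℕ → S), GSolvableSeries m c → n ≤ m) →
      derivedSeries Sˣ n = ⊥) := by
  have h0 : ∀ g : Sˣ, (0 : S) * (g : S) = 0 := fun g => InverseMonoidWithZero.zero_mul _
  have h00 : IsIdempotentElem (0 : S) := InverseMonoidWithZero.zero_mul _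
  have hone : ∀ g : Sˣ, g ∈ natconn (1 : S) → g = 1 := by
    intro g hg
    have hg' : (1 : S) * (g : S) = 1 := hg
    exact Units.ext (by simpa using hg')
  constructor
  · rintro ⟨c, hc0, hcn, hcc, -, hF⟩ -
    have main : ∀ k ≤ n, natconn (c (n - k)) ≤ Subgroup.upperCentralSeries Sˣ k := by
      intro k
      induction k with
      | zero =>
        intro _ g hg
        rw [Nat.sub_zero, hcn] at hg
        rw [hone g hg]
        exact one_mem _
      | succ k ih =>
        intro hk g hg
        refine Subgroup.mem_upperCentralSeries_succ_iff.mpr ?_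
        intro h
        have hlt : n - (k + 1) < n := by omega
        have e1 : n - (k + 1) + 1 = n - k := by omega
        have hF' := hF _ hlt
        rw [e1] at hF'
        apply ih (by omega)
        apply comm_mem_natconn (hcc _ (by omega)).1 (hcc _ (by omega)).2
        exact (hF' (mem_Fef _ (hcc _ (by omega)).1 hg)).2 _ (mem_Fef _ h00 (h0 h))
    have := main n le_rfl
    rw [Nat.sub_self, hc0] at this
    exact top_le_iff.mp fun g _ => this (h0 g)
  · rintro ⟨c, hc0, hcn, hcc, -, hF⟩ -
    have main : ∀ k ≤ n, derivedSeries Sˣ k ≤ natconn (c k) := by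
      intro k
      induction k with
      | zero =>
        intro _ g _
        rw [hc0]
        exact h0 g
      | succ k ih =>
        intro hk
        have ih' := ih (by omega)
        rw [derivedSeries_succ, Subgroup.commutator_le]
        intro g hg h hh
        rw [commutatorElement_def]
        apply comm_mem_natconn (hcc _ hk).1 (hcc _ hk).2
        exact hF k (by omega) _ (mem_Fef _ (hcc _ (by omega)).1 (ih' hg)) _
          (mem_Fef _ (hcc _ (by omega)).1 (ih' hh))
    refine eq_bot_iff.mpr fun g hg => ?_
    have := main n le_rfl hg
    rw [hcn] at this
    exact Subgroup.mem_bot.mpr (hone g this)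
end

section
/- Let S be a factorizable inverse monoid with group of units G and natural connection θ, and let e be an idempotent of S. Then N_e = {g ∈ G : g⁻¹eg = e} is a subgroup of G, eθ ∩ N_e is a normal subgroup of N_e, and the maximal subgroup H_e of S at e (the Green H-class of S containing e, i.e. the group of units of eS when e is central, and in general {x ∈ S : x x⁻¹ = x⁻¹ x = e}) is isomorphic to the quotient group N_e/(eθ ∩ N_e). -/
/-- For an idempotent `e` of a factorizable inverse monoid `S`,
`N_e = {g ∈ G : g⁻¹eg = e}` is a subgroup of the group of units `G`, `eθ ∩ N_e` is a
normal subgroup of `N_e`, and the maximal subgroup `H_e = {x : x x⁻¹ = x⁻¹ x = e}` is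
isomorphic to the quotient group `N_e/(eθ ∩ N_e)` (expressed via a multiplicative
surjection `N_e → H_e` whose fibres are exactly the cosets of `eθ ∩ N_e`). -/
theorem stmt_14 {S : Type*} [InverseMonoid S] (hfact : Factorizable S)
    (e : S) (he : IsIdempotentElem e) :
    ∃ N : Subgroup Sˣ, (N : Set Sˣ) = {g : Sˣ | (↑g⁻¹ : S) * e * (↑g : S) = e} ∧
      (∀ x ∈ natconn e ⊓ N, ∀ g ∈ N, g * x * g⁻¹ ∈ natconn e ⊓ N) ∧
      ∃ φ : Sˣ → S,
        (φ '' (N : Set Sˣ) = {x : S | x * x⁻¹ = e ∧ x⁻¹ * x = e}) ∧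
        (∀ a ∈ N, ∀ b ∈ N, φ (a * b) = φ a * φ b) ∧
        (∀ a ∈ N, ∀ b ∈ N, (φ a = φ b ↔ a⁻¹ * b ∈ natconn e ⊓ N)) := by
  let N : Subgroup Sˣ :=
    { carrier := {g : Sˣ | e * (g : S) = (g : S) * e}
      one_mem' := by simp
      mul_mem' := by
        intro a b ha hb
        simp only [Set.mem_setOf_eq, Units.val_mul] at *
        rw [← mul_assoc, ha, mul_assoc, hb, mul_assoc]
      inv_mem' := by
        intro a ha
        simp only [Set.mem_setOf_eq] at *
        rw [Units.eq_inv_mul_iff_mul_eq, ← mul_assoc, ← ha, mul_assoc, Units.mul_inv, mul_one] }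
  have hee : e * e = e := he
  have hN : ∀ g : Sˣ, g ∈ N ↔ e * (g : S) = (g : S) * e := fun g => Iff.rfl
  have hK : ∀ g : Sˣ, g ∈ natconn e ↔ e * (g : S) = e := fun g => Iff.rfl
  have hNc : ∀ g : Sˣ, g ∈ N ↔ (↑g⁻¹ : S) * e * (↑g : S) = e := by
    intro g
    rw [hN, mul_assoc, Units.inv_mul_eq_iff_eq_mul]
  have hinv : ∀ (f : S) (g : Sˣ), f * f = f → (↑g⁻¹ : S) * f = (f * (g : S))⁻¹ := by
    intro f g hf
    apply InverseMonoid.inv_unique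
    · have : f * (g : S) * ((↑g⁻¹ : S) * f) * (f * (g : S))
          = f * ((g : S) * (↑g⁻¹ : S)) * (f * f) * (g : S) := by simp only [mul_assoc]
      rw [this, Units.mul_inv, mul_one, hf, hf]
    · have : (↑g⁻¹ : S) * f * (f * (g : S)) * ((↑g⁻¹ : S) * f)
          = (↑g⁻¹ : S) * (f * f) * ((g : S) * (↑g⁻¹ : S)) * f := by simp only [mul_assoc]
      rw [this, Units.mul_inv, mul_one, hf, mul_assoc, hf]
  have hl : ∀ (f : S) (g : Sˣ), f * f = f → f * (g : S) * (f * (g : S))⁻¹ = f := by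
    intro f g hf
    rw [← hinv f g hf, mul_assoc, Units.mul_inv_cancel_left, hf]
  have hr : ∀ (f : S) (g : Sˣ), f * f = f →
      (f * (g : S))⁻¹ * (f * (g : S)) = (↑g⁻¹ : S) * f * (g : S) := by
    intro f g hf
    rw [← hinv f g hf, mul_assoc, ← mul_assoc f f, hf, mul_assoc]
  refine ⟨N, ?_, ?_, fun g => e * (g : S), ?_, ?_, ?_⟩
  · ext g
    exact hNc g
  · rintro x ⟨hx, hxN⟩ g hg
    refine ⟨?_, N.mul_mem (N.mul_mem hg hxN) (N.inv_mem hg)⟩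
    have hx' : e * (x : S) = e := hx
    have hg' : e * (g : S) = (g : S) * e := hg
    change e * ((g * x * g⁻¹ : Sˣ) : S) = e
    rw [Units.val_mul, Units.val_mul, ← mul_assoc, ← mul_assoc, hg', mul_assoc (g : S), hx',
      ← hg', Units.mul_inv_cancel_right]
  · ext x
    constructor
    · rintro ⟨g, hg, rfl⟩
      exact ⟨hl e g hee, (hr e g hee).trans ((hNc g).1 hg)⟩
    · rintro ⟨h1, h2⟩
      obtain ⟨f, _, hf, ⟨g, rfl⟩, rfl⟩ := hfact x
      have hfe : f = e := (hl f g hf).symm.trans h1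
      subst hfe
      exact ⟨g, (hNc g).2 ((hr f g hf).symm.trans h2), rfl⟩
  · intro a ha b hb
    have ha' : e * (a : S) = (a : S) * e := ha
    change e * ((a * b : Sˣ) : S) = e * (a : S) * (e * (b : S))
    rw [Units.val_mul, ← mul_assoc, ← mul_assoc, ha', mul_assoc (a : S) e e, hee]
  · intro a ha b hb
    have ha' : e * ((a⁻¹ : Sˣ) : S) = ((a⁻¹ : Sˣ) : S) * e := N.inv_mem ha
    have ha2 : e * (a : S) = (a : S) * e := ha
    have key : a⁻¹ * b ∈ natconn e ↔ e * (a : S) = e * (b : S) := by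
      rw [hK, Units.val_mul, ← mul_assoc, ha', mul_assoc, Units.inv_mul_eq_iff_eq_mul, ha2]
      exact eq_comm
    exact ⟨fun h => ⟨key.2 h, N.mul_mem (N.inv_mem ha) hb⟩, fun h => key.1 h.1⟩
end

section
/- Let S be a G-nilpotent (resp. G-solvable) factorizable inverse monoid with zero, with group of units G, of G-nilpotent length n (resp. G-solvable length n), whose natural connection θ is a dual isomorphism from the semilattice of idempotents onto a sublattice of L(G). Then every subgroup of S (in particular every maximal subgroup H_e = {x ∈ S : x x⁻¹ = x⁻¹ x = e}) is a nilpotent group of nilpotency class at most n (resp. a solvable group of derived length at most n). -/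
/-- Two idempotents with `e * f = f` and `f * e = e` coincide in an inverse monoid. -/
theorem idem_eq_aux {S : Type*} [InverseMonoidWithZero S] (e f : S) (he : e * e = e)
    (hf : f * f = f) (h1 : e * f = f) (h2 : f * e = e) : f = e := by
  have a : e = e⁻¹ := InverseMonoid.inv_unique e e (by rw [he, he]) (by rw [he, he])
  have b : f = e⁻¹ := InverseMonoid.inv_unique e f (by rw [h1, h2]) (by rw [h2, h1])
  rw [b, ← a]

/-- The mirror version of `idem_eq_aux`. -/
theorem idem_eq_aux' {S : Type*} [InverseMonoidWithZero S] (e f : S) (he : e * e = e)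
    (hf : f * f = f) (h1 : e * f = e) (h2 : f * e = f) : f = e := by
  have a : e = e⁻¹ := InverseMonoid.inv_unique e e (by rw [he, he]) (by rw [he, he])
  have b : f = e⁻¹ := InverseMonoid.inv_unique e f (by rw [h1, he]) (by rw [h2, hf])
  rw [b, ← a]

/-- A subgroup element is `e * g` with `g` a unit commuting with `e`. -/
theorem lift_unit {S : Type*} [InverseMonoidWithZero S] (hfact : Factorizable S)
    (e s t : S) (he : e * e = e) (hes : e * s = s) (hse : s * e = s) (hte : t * e = t)
    (hst : s * t = e) (hts : t * s = e) :
    ∃ g : Sˣ, s = e * (g : S) ∧ e * (g : S) = (g : S) * e := by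
  obtain ⟨f, _, hf, ⟨g, rfl⟩, hs⟩ := hfact s
  have hf' : f * f = f := hf
  have hsg : s * (↑g⁻¹ : S) = f := by rw [hs, mul_assoc, Units.mul_inv, mul_one]
  have hfs : f * s = s := by rw [hs, ← mul_assoc, hf']
  have hfe : f * e = e := by rw [← hst, ← mul_assoc, hfs]
  have hef : e * f = f := by rw [← hsg, ← mul_assoc, hes]
  have hfeq : f = e := idem_eq_aux e f he hf' hef hfe
  subst hfeq
  refine ⟨g, hs, ?_⟩
  have hfg : f * (g : S) * f = f * g := by rw [← hs, hse]
  have htg : t * (g : S) = f := by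
    rw [← hts]; conv_rhs => rw [hs, ← mul_assoc, hte]
  have ht : f * (↑g⁻¹ : S) = t := by rw [← htg, mul_assoc, Units.mul_inv, mul_one]
  have hp : (↑g⁻¹ : S) * f * g = f := by
    apply idem_eq_aux' f _ he
    · calc (↑g⁻¹ : S) * f * g * (↑g⁻¹ * f * g)
          = ↑g⁻¹ * f * (g * ↑g⁻¹) * f * g := by simp only [mul_assoc]
        _ = ↑g⁻¹ * (f * f) * g := by rw [Units.mul_inv]; simp only [mul_assoc, one_mul]
        _ = _ := by rw [he]
    · calc f * ((↑g⁻¹ : S) * f * g) = f * ↑g⁻¹ * f * g := by simp only [mul_assoc]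
        _ = f := by rw [ht, hte, htg]
    · calc (↑g⁻¹ : S) * f * g * f = ↑g⁻¹ * (f * g * f) := by simp only [mul_assoc]
        _ = _ := by rw [hfg, mul_assoc]
  calc f * (g : S) = g * (↑g⁻¹ * f * g) := by
        simp only [← mul_assoc]; rw [Units.mul_inv, one_mul]
    _ = g * f := by rw [hp]

/-- Every subgroup of `S` is a homomorphic image of a subgroup of the group of units. -/
theorem exists_cover {S : Type*} [InverseMonoidWithZero S] (hfact : Factorizable S)
    {H : Type*} [Group H] (φ : H → S) (hinj : Function.Injective φ)
    (hmul : ∀ a b : H, φ (a * b) = φ a * φ b) :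
    ∃ (K : Subgroup (Sˣ × H)), (∀ x ∈ K, x.1 = 1 → x = 1) ∧ ∀ a : H, ∃ g : Sˣ, (g, a) ∈ K := by
  have he : φ 1 * φ 1 = φ 1 := by rw [← hmul, one_mul]
  refine ⟨{ carrier := {x | φ x.2 = φ 1 * (x.1 : S) ∧ φ 1 * (x.1 : S) = x.1 * φ 1}
            one_mem' := by simp
            mul_mem' := ?_
            inv_mem' := ?_ }, ?_, ?_⟩
  · rintro ⟨g, a⟩ ⟨h, b⟩ ⟨h1, h2⟩ ⟨h3, h4⟩
    simp only [Set.mem_setOf_eq, Prod.mk_mul_mk, Units.val_mul] at *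
    constructor
    · rw [hmul, h1, h3]
      calc φ 1 * (g : S) * (φ 1 * h) = φ 1 * (g * φ 1) * h := by simp only [mul_assoc]
        _ = φ 1 * φ 1 * g * h := by rw [← h2]; simp only [mul_assoc]
        _ = _ := by rw [he, mul_assoc]
    · rw [← mul_assoc, h2, mul_assoc, h4, mul_assoc]
  · rintro ⟨g, a⟩ ⟨h1, h2⟩
    simp only [Set.mem_setOf_eq, Prod.inv_mk] at *
    have h5 : φ 1 * (↑g⁻¹ : S) = ↑g⁻¹ * φ 1 := by
      calc φ 1 * (↑g⁻¹ : S) = ↑g⁻¹ * (g * φ 1) * ↑g⁻¹ := by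
            rw [← mul_assoc, Units.inv_mul, one_mul]
        _ = _ := by rw [← h2, mul_assoc, mul_assoc, Units.mul_inv, mul_one]
    refine ⟨?_, h5⟩
    have h6 : φ a⁻¹ * φ 1 = φ a⁻¹ := by rw [← hmul, mul_one]
    have h7 : φ a⁻¹ * (g : S) = φ 1 := by
      rw [← inv_mul_cancel a, hmul, h1, ← mul_assoc, h6]
    rw [← h7, mul_assoc, Units.mul_inv, mul_one]
  · rintro ⟨g, a⟩ ⟨h1, h2⟩ h3
    simp only at h1 h3
    subst h3
    have : a = 1 := hinj (by simpa using h1)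
    rw [this]; rfl
  · intro a
    obtain ⟨g, h1, h2⟩ := lift_unit hfact (φ 1) (φ a) (φ a⁻¹) he
      (by rw [← hmul, one_mul]) (by rw [← hmul, mul_one]) (by rw [← hmul, mul_one])
      (by rw [← hmul, mul_inv_cancel]) (by rw [← hmul, inv_mul_cancel])
    exact ⟨g, h1, h2⟩

/-- Commutation modulo a central idempotent puts the commutator into its natural connection. -/
theorem commutator_mem_natconn {S : Type*} [InverseMonoidWithZero S] (f : S)
    (hf : f * f = f) (hc : ∀ s : S, f * s = s * f) (g h : Sˣ)
    (hgh : f * (g : S) * (f * h) = f * (h : S) * (f * g)) : g * h * g⁻¹ * h⁻¹ ∈ natconn f := by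
  have key : ∀ x y : S, f * x * (f * y) = f * (x * y) := by
    intro x y
    calc f * x * (f * y) = f * (x * f) * y := by simp only [mul_assoc]
      _ = (f * f) * (x * y) := by rw [← hc]; simp only [mul_assoc]
      _ = _ := by rw [hf]
  rw [key, key] at hgh
  change f * ((g * h * g⁻¹ * h⁻¹ : Sˣ) : S) = f
  have e1 : f * ((g * h * g⁻¹ * h⁻¹ : Sˣ) : S)
      = f * ((g : S) * h) * ((g⁻¹ * h⁻¹ : Sˣ) : S) := by
    simp only [Units.val_mul, mul_assoc]
  have e2 : f * ((h : S) * g) * ((g⁻¹ * h⁻¹ : Sˣ) : S) = f * ((h * g * (g⁻¹ * h⁻¹) : Sˣ) : S) := by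
    simp only [Units.val_mul, mul_assoc]
  rw [e1, hgh, e2]
  have : h * g * (g⁻¹ * h⁻¹) = 1 := by group
  rw [this, Units.val_one, mul_one]

theorem natconn_one_eq_bot {S : Type*} [InverseMonoidWithZero S] :
    natconn (1 : S) = ⊥ := by
  rw [eq_bot_iff]
  intro g hg
  have h : (1 : S) * g = 1 := hg
  rw [one_mul] at h
  exact Subgroup.mem_bot.2 (Units.ext h)

theorem natconn_zero_eq_top {S : Type*} [InverseMonoidWithZero S] :
    natconn (0 : S) = ⊤ := by
  rw [eq_top_iff]
  intro g _
  exact InverseMonoidWithZero.zero_mul (g : S)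

theorem mem_Fef_of_mem_natconn {S : Type*} [InverseMonoidWithZero S] (e f : S)
    (he : IsIdempotentElem e) (g : Sˣ) (hg : g ∈ natconn e) : f * (g : S) ∈ Fef e f :=
  ⟨g, ⟨e, he, Eq.symm hg⟩, rfl⟩

theorem units_nilpotent {S : Type*} [InverseMonoidWithZero S] (n : ℕ) (c : ℕ → S)
    (hc : GNilpotentSeries n c) : (⊤ : Subgroup Sˣ).lowerCentralSeries n = ⊥ := by
  obtain ⟨h0, hn, hid, -, hF⟩ := hc
  have main : ∀ i ≤ n, (⊤ : Subgroup Sˣ).lowerCentralSeries i ≤ natconn (c i) := by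
    intro i
    induction i with
    | zero => intro _; rw [h0, natconn_zero_eq_top]; exact le_top
    | succ i ih =>
      intro hi
      rw [Subgroup.lowerCentralSeries_succ, Subgroup.commutator_le]
      intro g hg h _
      have hg' := ih (by omega) hg
      have hz : IsIdempotentElem (0 : S) := InverseMonoidWithZero.zero_mul 0
      refine commutator_mem_natconn _ (hid _ hi).1 (fun s => (hid _ hi).2.2 s trivial) g h ?_
      exact (hF i (by omega) (mem_Fef_of_mem_natconn _ _ (hid i (by omega)).1 g hg')).2 _
        (mem_Fef_of_mem_natconn _ _ hz h (by rw [natconn_zero_eq_top]; trivial))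
  have := main n le_rfl
  rwa [hn, natconn_one_eq_bot, le_bot_iff] at this

theorem units_solvable {S : Type*} [InverseMonoidWithZero S] (n : ℕ) (c : ℕ → S)
    (hc : GSolvableSeries n c) : derivedSeries Sˣ n = ⊥ := by
  obtain ⟨h0, hn, hid, -, hF⟩ := hc
  have main : ∀ i ≤ n, derivedSeries Sˣ i ≤ natconn (c i) := by
    intro i
    induction i with
    | zero => intro _; rw [h0, natconn_zero_eq_top]; exact le_top
    | succ i ih =>
      intro hi
      rw [derivedSeries_succ, Subgroup.commutator_le]
      intro g hg h hh
      have hg' := ih (by omega) hg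
      have hh' := ih (by omega) hh
      refine commutator_mem_natconn _ (hid _ hi).1 (fun s => (hid _ hi).2.2 s trivial) g h ?_
      exact hF i (by omega) _ (mem_Fef_of_mem_natconn _ _ (hid i (by omega)).1 g hg') _
        (mem_Fef_of_mem_natconn _ _ (hid i (by omega)).1 h hh')
  have := main n le_rfl
  rwa [hn, natconn_one_eq_bot, le_bot_iff] at this

/-- If `S` is a `G`-nilpotent (resp. `G`-solvable) factorizable inverse
monoid with zero of `G`-nilpotent (resp. `G`-solvable) length `n`, whose natural
connection is a dual isomorphism onto a sublattice of the lattice of subgroups of the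
group of units, then every subgroup of `S` (i.e. every group embedded multiplicatively
in `S`) is nilpotent of class at most `n` (resp. solvable of derived length at most
`n`). -/
theorem stmt_15 {S : Type*} [InverseMonoidWithZero S] (hfact : Factorizable S)
    (hθ : NatconnDualIso S) (n : ℕ) :
    ((∃ c : ℕ → S, GNilpotentSeries n c) →
      (∀ (m : ℕ) (c : ℕ → S), GNilpotentSeries m c → n ≤ m) →
      ∀ (H : Type*) [Group H] (φ : H → S), Function.Injective φ →
        (∀ a b : H, φ (a * b) = φ a * φ b) → upperCentralSeries H n = ⊤) ∧
    ((∃ c : ℕ → S, GSolvableSeries n c) →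
      (∀ (m : ℕ) (c : ℕ → S), GSolvableSeries m c → n ≤ m) →
      ∀ (H : Type*) [Group H] (φ : H → S), Function.Injective φ →
        (∀ a b : H, φ (a * b) = φ a * φ b) → derivedSeries H n = ⊥) := by
  constructor
  · rintro ⟨c, hc⟩ - H _ φ hinj hmul
    obtain ⟨K, hK1, hK2⟩ := exists_cover hfact φ hinj hmul
    let p : K →* Sˣ := (MonoidHom.fst Sˣ H).comp K.subtype
    let q : K →* H := (MonoidHom.snd Sˣ H).comp K.subtype
    have hp : Function.Injective p := by
      rw [injective_iff_map_eq_one]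
      intro x hx
      exact Subtype.ext (hK1 x.1 x.2 hx)
    have hq : Function.Surjective q := fun a => by
      obtain ⟨g, hg⟩ := hK2 a
      exact ⟨⟨(g, a), hg⟩, rfl⟩
    have hK : (⊤ : Subgroup K).lowerCentralSeries n = ⊥ := by
      rw [← Subgroup.map_eq_bot_iff_of_injective _ hp, Subgroup.map_lowerCentralSeries,
        ← le_bot_iff, ← units_nilpotent n c hc]
      exact Subgroup.lowerCentralSeries_mono n le_top
    have hH : (⊤ : Subgroup H).lowerCentralSeries n = ⊥ := by
      rw [← Subgroup.map_top_of_surjective q hq, ← Subgroup.map_lowerCentralSeries, hK,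
        Subgroup.map_bot]
    exact Subgroup.lowerCentralSeries_eq_bot_iff_upperCentralSeries_eq_top.1 hH
  · rintro ⟨c, hc⟩ - H _ φ hinj hmul
    obtain ⟨K, hK1, hK2⟩ := exists_cover hfact φ hinj hmul
    let p : K →* Sˣ := (MonoidHom.fst Sˣ H).comp K.subtype
    let q : K →* H := (MonoidHom.snd Sˣ H).comp K.subtype
    have hp : Function.Injective p := by
      rw [injective_iff_map_eq_one]
      intro x hx
      exact Subtype.ext (hK1 x.1 x.2 hx)
    have hq : Function.Surjective q := fun a => by
      obtain ⟨g, hg⟩ := hK2 a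
      exact ⟨⟨(g, a), hg⟩, rfl⟩
    have hK : derivedSeries K n = ⊥ := by
      rw [← Subgroup.map_eq_bot_iff_of_injective _ hp, ← le_bot_iff,
        ← units_solvable n c hc]
      exact map_derivedSeries_le_derivedSeries p n
    rw [← map_derivedSeries_eq hq, hK, Subgroup.map_bot]
end

section
/- Every subcentral idempotent of an inverse monoid S with zero is anti-abnormal, i.e. its Green R-class contains exactly one pre-idempotent (namely the idempotent itself). -/
theorem aux_inv_idem {S : Type*} [InverseMonoid S] {e : S} (he : e * e = e) : e⁻¹ = e := by
  symm
  apply InverseMonoid.inv_unique <;> rw [he, he]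

theorem aux_idem_mul {S : Type*} [InverseMonoid S] {e f : S} (he : e * e = e) (hf : f * f = f) :
    (e * f) * (e * f) = e * f := by
  have h1 := InverseMonoid.mul_inv_mul (e * f)
  have h2 := InverseMonoid.inv_mul_inv (e * f)
  have h3 := InverseMonoid.inv_unique (e * f) (f * (e * f)⁻¹ * e)
  have h4 := InverseMonoid.inv_unique (e * f)⁻¹ (e * f) h2 h1
  generalize (e * f)⁻¹ = x at *
  have hee : ∀ y, e * (e * y) = e * y := fun y => by rw [← mul_assoc, he]
  have hff : ∀ y, f * (f * y) = f * y := fun y => by rw [← mul_assoc, hf]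
  simp only [mul_assoc] at h1 h2 h3
  simp only [hee, hff] at h3
  have h2' : ∀ y, x * (e * (f * (x * y))) = x * y := fun y => by
    have := congrArg (· * y) h2
    simpa only [mul_assoc] using this
  have hx := h3 h1 (by rw [h2'])
  have hxx : x * x = x := by
    nth_rewrite 1 2 [← hx]
    simp only [mul_assoc]
    rw [h2', hx]
  rw [aux_inv_idem hxx] at h4
  rw [h4, hxx]

theorem aux_idem_comm {S : Type*} [InverseMonoid S] {e f : S} (he : e * e = e) (hf : f * f = f) :
    e * f = f * e := by
  have h1 := aux_idem_mul he hf
  have h2 := aux_idem_mul hf he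
  have hee : ∀ y, e * (e * y) = e * y := fun y => by rw [← mul_assoc, he]
  have hff : ∀ y, f * (f * y) = f * y := fun y => by rw [← mul_assoc, hf]
  have h3 := InverseMonoid.inv_unique (e * f) (f * e)
    (by simp only [mul_assoc, hee, hff] at *; exact h1)
    (by simp only [mul_assoc, hee, hff] at *; exact h2)
  rw [h3, aux_inv_idem h1]

/-- STATEMENT 18: Every subcentral idempotent `e` of an inverse monoid with zero is
anti-abnormal: its Green `R`-class `R_e = {a : a a⁻¹ = e}` contains exactly one
pre-idempotent (an element `a` with `a² ≤ a`), namely `e` itself. -/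
theorem stmt_18 {S : Type*} [InverseMonoidWithZero S] (e : S) (hsc : IsSubcentralIdem e) :
    (e * e⁻¹ = e ∧ NatLe (e * e) e) ∧
    ∀ a : S, a * a⁻¹ = e → NatLe (a * a) a → a = e := by
  obtain ⟨n, c, ⟨h0, -, hid, hcen⟩, i, hi, rfl⟩ := hsc
  have hei : c i * c i = c i := hid i hi
  refine ⟨⟨by rw [aux_inv_idem hei, hei], c i, hei, rfl⟩, ?_⟩
  rintro a ha ⟨h, hh, hah⟩
  have hh' : h * h = h := hh
  have hle : ∀ k, ∀ j, j + k = i → c j * c i = c j := by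
    intro k
    induction k with
    | zero => intro j hj; obtain rfl : j = i := by omega
              exact hei
    | succ k ih =>
      intro j hj
      obtain ⟨⟨g, -, hg⟩, -⟩ := hcen j (by omega)
      rw [hg, mul_assoc, ih (j + 1) (by omega)]
  have key : ∀ j, j ≤ i → c j * a = c j := by
    intro j
    induction j with
    | zero => intro _; rw [h0]; exact InverseMonoidWithZero.zero_mul a
    | succ j ih =>
      intro hj
      have hc := (hcen j (by omega)).2 a ⟨c j, hid j (by omega), (ih (by omega)).symm⟩
      have hfe := hle (i - (j + 1)) (j + 1) (by omega)
      have hf : c (j + 1) * c (j + 1) = c (j + 1) := hid (j + 1) (by omega)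
      generalize c (j + 1) = f at *
      generalize c i = e at *
      have hfh : f * h = h * f := aux_idem_comm hf hh'
      have e1 : a * e = h * e := by
        rw [← ha, ← mul_assoc, hah, mul_assoc]
      have e2 : f * a = h * f := by
        calc f * a = a * (f * e) := by rw [hfe, hc]
          _ = f * (a * e) := by rw [← mul_assoc, ← hc, mul_assoc]
          _ = h * (f * e) := by rw [e1, ← mul_assoc, hfh, mul_assoc]
          _ = h * f := by rw [hfe]
      have e3 : f = h * f * a⁻¹ := by rw [← e2, mul_assoc, ha, hfe]
      have e4 : h * f = f := by
        calc h * f = h * (h * f * a⁻¹) := by rw [← e3]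
          _ = h * f * a⁻¹ := by rw [← mul_assoc, ← mul_assoc, hh']
          _ = f := e3.symm
      rw [e2, e4]
  have := key i le_rfl
  calc a = a * a⁻¹ * a := (InverseMonoid.mul_inv_mul a).symm
    _ = c i := by rw [ha, this]
end
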